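/- Let K be an algebraically closed field of characteristic zero and n ≥ 2. Every K-algebra automorphism of K[x^n, x^{n−1}y, …, x y^{n−1}, y^n] of finite order is linearizable: if f is an automorphism with f^m = id for some m ≥ 1, then there exists an automorphism φ of K[x^n, …, y^n] such that φ^{-1} ∘ f ∘ φ is the restriction to K[x^n, …, y^n] of a linear automorphism of K[x,y] (an element of GL_2(K)). -/

import Mathlib

open MvPolynomial

/-- A linear automorphism of `K[x,y]`: `(x,y) ↦ (ax+by, cx+dy)` with `ad - bc ≠ 0`. -/
def IsLinearAut (K : Type*) [Field K]
    (φ : MvPolynomial (Fin 2) K ≃ₐ[K] MvPolynomial (Fin 2) K) : Prop :=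
  ∃ a b c d : K, a * d - b * c ≠ 0 ∧
    φ (X 0) = C a * X 0 + C b * X 1 ∧ φ (X 1) = C c * X 0 + C d * X 1

/-- The Veronese subalgebra `K[xⁿ, xⁿ⁻¹y, …, xyⁿ⁻¹, yⁿ]` of `K[x,y]`. -/
noncomputable def veronese (K : Type*) [Field K] (n : ℕ) :
    Subalgebra K (MvPolynomial (Fin 2) K) :=
  Algebra.adjoin K {m | ∃ i ≤ n, m = X 0 ^ (n - i) * X 1 ^ i}

namespace Ver

section Weights

variable {K : Type*} [Field K]

/-- Weight of an exponent vector. -/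
def wt (a b : ℤ) (m : Fin 2 →₀ ℕ) : ℤ := a * m 0 + b * m 1

theorem wt_add (a b : ℤ) (m m' : Fin 2 →₀ ℕ) : wt a b (m + m') = wt a b m + wt a b m' := by
  simp [wt]; ring

/-- Polynomials all of whose monomials have weight in `s`. -/
def SS (K : Type*) [Field K] (a b : ℤ) (s : Set ℤ) : Submodule K (MvPolynomial (Fin 2) K) where
  carrier := {p | ∀ m, coeff m p ≠ 0 → wt a b m ∈ s}
  add_mem' := by
    intro p q hp hq m hm
    by_cases h : coeff m p = 0
    · apply hq; intro h'; apply hm; simp [h, h']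
    · exact hp m h
  zero_mem' := by intro m hm; simp at hm
  smul_mem' := by
    intro c p hp m hm
    apply hp; intro h; apply hm; simp [h]

variable {a b a' b' N M : ℤ} {s t u : Set ℤ}
variable {p q p₀ q₀ : MvPolynomial (Fin 2) K}

theorem mem_SS : p ∈ SS K a b s ↔ ∀ m, coeff m p ≠ 0 → wt a b m ∈ s := Iff.rfl

theorem SS_mono (h : s ⊆ t) (hp : p ∈ SS K a b s) : p ∈ SS K a b t :=
  fun m hm => h (hp m hm)

theorem SS_mul (h : ∀ x ∈ s, ∀ y ∈ t, x + y ∈ u) (hp : p ∈ SS K a b s) (hq : q ∈ SS K a b t) :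
    p * q ∈ SS K a b u := by
  classical
  intro m hm
  rw [coeff_mul] at hm
  obtain ⟨x, hx, hne⟩ := Finset.exists_ne_zero_of_sum_ne_zero hm
  rw [Finset.HasAntidiagonal.mem_antidiagonal] at hx
  rw [← hx, wt_add]
  exact h _ (hp _ (left_ne_zero_of_mul hne)) _ (hq _ (right_ne_zero_of_mul hne))

theorem SS_monomial (m : Fin 2 →₀ ℕ) (c : K) (h : wt a b m ∈ s) : monomial m c ∈ SS K a b s := by
  classical
  intro m' hm'
  rw [coeff_monomial] at hm'
  split_ifs at hm' with h1
  · rwa [← h1]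
  · simp at hm'

theorem SS_C (c : K) (h : 0 ∈ s) : C c ∈ SS K a b s := by
  rw [C_apply]; apply SS_monomial; simpa [wt] using h

theorem SS_one (h : 0 ∈ s) : (1 : MvPolynomial (Fin 2) K) ∈ SS K a b s := by
  rw [← C_1]; exact SS_C _ h

theorem SS_X0 (h : a ∈ s) : (X 0 : MvPolynomial (Fin 2) K) ∈ SS K a b s := by
  apply SS_monomial; simpa [wt] using h

theorem SS_X1 (h : b ∈ s) : (X 1 : MvPolynomial (Fin 2) K) ∈ SS K a b s := by
  apply SS_monomial; simpa [wt] using h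

theorem SS_C_mul (c : K) (hp : p ∈ SS K a b s) : C c * p ∈ SS K a b s := by
  rw [C_mul']; exact Submodule.smul_mem _ _ hp

theorem SS_Iic_pow (hp : p ∈ SS K a b (Set.Iic N)) (k : ℕ) :
    p ^ k ∈ SS K a b (Set.Iic (k * N)) := by
  induction k with
  | zero => simpa using SS_one (by simp)
  | succ k ih =>
    rw [pow_succ]
    refine SS_mul ?_ ih hp
    intro x hx y hy
    simp only [Set.mem_Iic] at *
    push_cast; linarith

theorem SS_eq_pow (hp : p ∈ SS K a b {N}) (k : ℕ) :
    p ^ k ∈ SS K a b {(k * N : ℤ)} := by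
  induction k with
  | zero => simpa using SS_one (by simp)
  | succ k ih =>
    rw [pow_succ]
    refine SS_mul ?_ ih hp
    intro x hx y hy
    simp only [Set.mem_singleton_iff] at *
    rw [hx, hy]; push_cast; ring

theorem SS_eq_mul (hp : p ∈ SS K a b {N}) (hq : q ∈ SS K a b {M}) :
    p * q ∈ SS K a b {N + M} := by
  refine SS_mul ?_ hp hq
  intro x hx y hy
  simp only [Set.mem_singleton_iff] at *
  rw [hx, hy]

/-- change of weights -/
theorem SS_weights (h : ∀ i j : ℕ, a * i + b * j ∈ s → a' * i + b' * j ∈ t)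
    (hp : p ∈ SS K a b s) : p ∈ SS K a' b' t :=
  fun m hm => h _ _ (hp m hm)

/-- `p₀` is the part of weight `N` of `p`, all other monomials having smaller weight. -/
def Lead (a b N : ℤ) (p p₀ : MvPolynomial (Fin 2) K) : Prop :=
  p₀ ∈ SS K a b {N} ∧ p - p₀ ∈ SS K a b (Set.Iio N)

theorem Lead.le (h : Lead a b N p p₀) : p ∈ SS K a b (Set.Iic N) := by
  have h1 := SS_mono (t := Set.Iic N) (by simp) h.1
  have h2 := SS_mono (t := Set.Iic N) Set.Iio_subset_Iic_self h.2
  simpa using add_mem h1 h2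

theorem Lead.of_hom (h : p ∈ SS K a b {N}) : Lead a b N p p := ⟨h, by simp⟩

theorem Lead.of_lt (h : p ∈ SS K a b (Set.Iio N)) : Lead a b N p 0 := ⟨by simp, by simpa⟩

theorem Lead.lt_of_zero (h : Lead a b N p 0) : p ∈ SS K a b (Set.Iio N) := by simpa using h.2

theorem Lead.add (h : Lead a b N p p₀) (h' : Lead a b N q q₀) : Lead a b N (p + q) (p₀ + q₀) := by
  refine ⟨add_mem h.1 h'.1, ?_⟩
  have := add_mem h.2 h'.2
  rwa [show p + q - (p₀ + q₀) = p - p₀ + (q - q₀) by ring]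

theorem Lead.sub (h : Lead a b N p p₀) (h' : Lead a b N q q₀) : Lead a b N (p - q) (p₀ - q₀) := by
  refine ⟨sub_mem h.1 h'.1, ?_⟩
  have := sub_mem h.2 h'.2
  rwa [show p - q - (p₀ - q₀) = p - p₀ - (q - q₀) by ring]

theorem Lead.mul (h : Lead a b N p p₀) (h' : Lead a b M q q₀) :
    Lead a b (N + M) (p * q) (p₀ * q₀) := by
  refine ⟨SS_eq_mul h.1 h'.1, ?_⟩
  rw [show p * q - p₀ * q₀ = (p - p₀) * q + p₀ * (q - q₀) by ring]
  refine add_mem (SS_mul ?_ h.2 h'.le) (SS_mul ?_ h.1 h'.2)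
  · intro x hx y hy
    simp only [Set.mem_Iio, Set.mem_Iic] at *; linarith
  · intro x hx y hy
    simp only [Set.mem_Iio, Set.mem_singleton_iff] at *; linarith

theorem Lead.C_mul (c : K) (h : Lead a b N p p₀) : Lead a b N (C c * p) (C c * p₀) := by
  refine ⟨SS_C_mul _ h.1, ?_⟩
  rw [← mul_sub]; exact SS_C_mul _ h.2

theorem Lead.pow (h : Lead a b N p p₀) (k : ℕ) : Lead a b (k * N) (p ^ k) (p₀ ^ k) := by
  induction k with
  | zero => simpa using Lead.of_hom (SS_one (by simp))
  | succ k ih =>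
    rw [pow_succ, pow_succ]
    convert ih.mul h using 1
    push_cast; ring

theorem Lead.sum {ι : Type*} (S : Finset ι) (f g : ι → MvPolynomial (Fin 2) K)
    (h : ∀ i ∈ S, Lead a b N (f i) (g i)) : Lead a b N (∑ i ∈ S, f i) (∑ i ∈ S, g i) := by
  refine ⟨sum_mem fun i hi => (h i hi).1, ?_⟩
  rw [← Finset.sum_sub_distrib]
  exact sum_mem fun i hi => (h i hi).2

theorem eq_zero_of_disjoint (h : Disjoint s t) (hp : p ∈ SS K a b s) (hq : p ∈ SS K a b t) :
    p = 0 := by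
  ext m
  by_contra hm
  exact Set.disjoint_left.1 h (hp m (by simpa using hm)) (hq m (by simpa using hm))

theorem Lead.eq_zero (h : Lead a b N p p₀) (h' : p ∈ SS K a b (Set.Iio N)) : p₀ = 0 := by
  have : p₀ ∈ SS K a b (Set.Iio N) := by simpa using sub_mem h' h.2
  exact eq_zero_of_disjoint (s := {N}) (t := Set.Iio N) (by simp) h.1 this

/-- If leading part nonzero and `p` has weights at most `M` then `N ≤ M`. -/
theorem Lead.le_of_mem (h : Lead a b N p p₀) (h0 : p₀ ≠ 0) (h' : p ∈ SS K a b (Set.Iic M)) :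
    N ≤ M := by
  by_contra hlt
  push Not at hlt
  exact h0 (h.eq_zero (SS_mono (fun x hx => lt_of_le_of_lt hx hlt) h'))

theorem Lead.weight_unique (h : Lead a b N p p₀) (h0 : p₀ ≠ 0) (h' : Lead a b M p q₀)
    (h0' : q₀ ≠ 0) : N = M :=
  le_antisymm (h.le_of_mem h0 h'.le) (h'.le_of_mem h0' h.le)

theorem Lead.unique (h : Lead a b N p p₀) (h' : Lead a b N p q₀) : p₀ = q₀ := by
  have h2 := h.sub h'
  rw [sub_self] at h2
  exact sub_eq_zero.1 (h2.eq_zero (zero_mem _))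

theorem aeval_monomial2 (P Q : MvPolynomial (Fin 2) K) (m : Fin 2 →₀ ℕ) (c : K) :
    aeval ![P, Q] (monomial m c) = C c * (P ^ (m 0) * Q ^ (m 1)) := by
  rw [aeval_monomial, Finsupp.prod_fintype _ _ (by simp)]
  simp [Fin.prod_univ_two, MvPolynomial.algebraMap_eq]

theorem aeval_eq_sum2 (P Q T : MvPolynomial (Fin 2) K) :
    aeval ![P, Q] T = ∑ m ∈ T.support, C (coeff m T) * (P ^ (m 0) * Q ^ (m 1)) := by
  conv_lhs => rw [T.as_sum]
  rw [map_sum]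
  simp_rw [aeval_monomial2]

variable {P Q T T₀ : MvPolynomial (Fin 2) K}

theorem SS_comp_lt (hP : P ∈ SS K a' b' (Set.Iic a)) (hQ : Q ∈ SS K a' b' (Set.Iic b))
    (hT : T ∈ SS K a b (Set.Iio N)) : aeval ![P, Q] T ∈ SS K a' b' (Set.Iio N) := by
  rw [aeval_eq_sum2]
  refine sum_mem fun m hm => SS_C_mul _ ?_
  have hw := hT m (by simpa using hm)
  refine SS_mul ?_ (SS_Iic_pow hP (m 0)) (SS_Iic_pow hQ (m 1))
  intro x hx y hy
  simp only [Set.mem_Iio, Set.mem_Iic, wt] at *; linarith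

theorem SS_comp_le (hP : P ∈ SS K a' b' (Set.Iic a)) (hQ : Q ∈ SS K a' b' (Set.Iic b))
    (hT : T ∈ SS K a b (Set.Iic N)) : aeval ![P, Q] T ∈ SS K a' b' (Set.Iic N) := by
  have := SS_comp_lt (N := N + 1) hP hQ (SS_mono (fun x hx => by simp at *; omega) hT)
  exact SS_mono (fun x hx => by simp at *; omega) this

theorem Lead.comp (hT : Lead a b N T T₀) (hP : Lead a' b' a P p) (hQ : Lead a' b' b Q q) :
    Lead a' b' N (aeval ![P, Q] T) (aeval ![p, q] T₀) := by
  have h1 : Lead a' b' N (aeval ![P, Q] (T - T₀)) 0 :=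
    Lead.of_lt (SS_comp_lt hP.le hQ.le hT.2)
  have h2 : Lead a' b' N (aeval ![P, Q] T₀) (aeval ![p, q] T₀) := by
    rw [aeval_eq_sum2, aeval_eq_sum2]
    refine Lead.sum _ _ _ fun m hm => Lead.C_mul _ ?_
    have hw : wt a b m = N := hT.1 m (by simpa using hm)
    convert (hP.pow (m 0)).mul (hQ.pow (m 1)) using 1
    rw [← hw, wt]; ring
  simpa using h1.add h2

theorem exists_lead_of_le (N : ℤ) (hp : p ∈ SS K a b (Set.Iic N)) : ∃ p₀, Lead a b N p p₀ := by
  classical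
  refine ⟨∑ m ∈ p.support.filter (fun m => wt a b m = N), monomial m (coeff m p), ?_, ?_⟩
  · refine sum_mem fun m hm => SS_monomial _ _ ?_
    simpa using (Finset.mem_filter.1 hm).2
  · conv in p - _ => enter [1]; rw [p.as_sum]
    rw [← Finset.sum_filter_add_sum_filter_not p.support (fun m => wt a b m = N)]
    rw [add_sub_cancel_left]
    refine sum_mem fun m hm => SS_monomial _ _ ?_
    rw [Finset.mem_filter] at hm
    exact lt_of_le_of_ne (hp m (by simpa using hm.1)) hm.2

theorem exists_lead (a b : ℤ) (hp : p ≠ 0) : ∃ N p₀, p₀ ≠ 0 ∧ Lead a b N p p₀ ∧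
    ∃ m, coeff m p ≠ 0 ∧ wt a b m = N := by
  obtain ⟨m, hm, hmax⟩ := Finset.exists_max_image p.support (wt a b) (by simpa using hp)
  obtain ⟨p₀, h⟩ := exists_lead_of_le (a := a) (b := b) (wt a b m) (p := p)
    (fun m' hm' => hmax m' (by simpa using hm'))
  refine ⟨_, p₀, ?_, h, m, by simpa using hm, rfl⟩
  rintro rfl
  have := h.lt_of_zero m (by simpa using hm)
  simp at this

theorem Lead.pderiv0 (h : Lead a b N p p₀) : Lead a b (N - a) (pderiv 0 p) (pderiv 0 p₀) := by
  have key : ∀ (s t : Set ℤ) (g : MvPolynomial (Fin 2) K), (∀ x ∈ s, x - a ∈ t) →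
      g ∈ SS K a b s → pderiv 0 g ∈ SS K a b t := by
    intro s t g hst hg
    rw [g.as_sum, map_sum]
    refine sum_mem fun m hm => ?_
    rw [pderiv_monomial]
    have hw := hst _ (hg m (by simpa using hm))
    by_cases h0 : m 0 = 0
    · simp [h0]
    · refine SS_monomial _ _ ?_
      convert hw using 1
      have : ((m 0 - 1 : ℕ) : ℤ) = m 0 - 1 := by omega
      simp [wt, this]; ring
  refine ⟨key {N} _ _ (by simp) h.1, ?_⟩
  rw [← map_sub]
  exact key (Set.Iio N) _ _ (by simp) h.2

theorem Lead.pderiv1 (h : Lead a b N p p₀) : Lead a b (N - b) (pderiv 1 p) (pderiv 1 p₀) := by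
  have key : ∀ (s t : Set ℤ) (g : MvPolynomial (Fin 2) K), (∀ x ∈ s, x - b ∈ t) →
      g ∈ SS K a b s → pderiv 1 g ∈ SS K a b t := by
    intro s t g hst hg
    rw [g.as_sum, map_sum]
    refine sum_mem fun m hm => ?_
    rw [pderiv_monomial]
    have hw := hst _ (hg m (by simpa using hm))
    by_cases h0 : m 1 = 0
    · simp [h0]
    · refine SS_monomial _ _ ?_
      convert hw using 1
      have : ((m 1 - 1 : ℕ) : ℤ) = m 1 - 1 := by omega
      simp [wt, this]; ring
  refine ⟨key {N} _ _ (by simp) h.1, ?_⟩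
  rw [← map_sub]
  exact key (Set.Iio N) _ _ (by simp) h.2

end Weights

end Ver

namespace Ver

section LND

variable {K : Type*} [Field K]

theorem deriv_eq (D : Derivation K (MvPolynomial (Fin 2) K) (MvPolynomial (Fin 2) K))
    (g : MvPolynomial (Fin 2) K) :
    D g = pderiv 0 g * D (X 0) + pderiv 1 g * D (X 1) := by
  have : D = (D (X 0)) • (pderiv 0 : Derivation K (MvPolynomial (Fin 2) K) _)
      + (D (X 1)) • (pderiv 1 : Derivation K (MvPolynomial (Fin 2) K) _) := by
    apply MvPolynomial.derivation_ext
    intro i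
    fin_cases i <;> simp [pderiv_X]
  conv_lhs => rw [this]
  simp [mul_comm]

/-- locally nilpotent -/
def LN (D : Derivation K (MvPolynomial (Fin 2) K) (MvPolynomial (Fin 2) K)) : Prop :=
  ∀ g, ∃ k : ℕ, D^[k] g = 0

theorem iter_zero_of_le (D : Derivation K (MvPolynomial (Fin 2) K) (MvPolynomial (Fin 2) K))
    {g : MvPolynomial (Fin 2) K} {k l : ℕ} (h : k ≤ l) (hk : D^[k] g = 0) : D^[l] g = 0 := by
  obtain ⟨t, rfl⟩ := Nat.exists_eq_add_of_le h
  rw [add_comm, Function.iterate_add_apply, hk]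
  exact iterate_map_zero D t

/-- `g` has degree exactly `k` with respect to `D` -/
def DD (D : Derivation K (MvPolynomial (Fin 2) K) (MvPolynomial (Fin 2) K)) (k : ℕ)
    (g : MvPolynomial (Fin 2) K) : Prop := D^[k] g ≠ 0 ∧ D^[k + 1] g = 0

variable {D : Derivation K (MvPolynomial (Fin 2) K) (MvPolynomial (Fin 2) K)}
variable {g h : MvPolynomial (Fin 2) K} {k l : ℕ}

theorem DD_exists (hD : LN D) (hg : g ≠ 0) : ∃ k, DD D k g := by
  classical
  have hex := hD g
  have h1 := Nat.find_spec hex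
  have h2 : Nat.find hex ≠ 0 := by
    intro h0
    rw [h0] at h1
    exact hg h1
  obtain ⟨k, hk⟩ := Nat.exists_eq_succ_of_ne_zero h2
  refine ⟨k, Nat.find_min hex (by omega), ?_⟩
  rw [hk] at h1
  exact h1

theorem DD_unique (h1 : DD D k g) (h2 : DD D l g) : k = l := by
  by_contra hne
  rcases lt_or_gt_of_ne hne with h | h
  · exact h2.1 (iter_zero_of_le D h h1.2)
  · exact h1.1 (iter_zero_of_le D h h2.2)

theorem iter_leibniz (n : ℕ) (g h : MvPolynomial (Fin 2) K) :
    D^[n] (g * h) = ∑ ij ∈ Finset.HasAntidiagonal.antidiagonal n, n.choose ij.1 • (D^[ij.1] g * D^[ij.2] h) := by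
  induction n with
  | zero => simp
  | succ n ih =>
    rw [Finset.sum_antidiagonal_choose_succ_nsmul (M := MvPolynomial (Fin 2) K)
      (fun i j => D^[i] g * D^[j] h) n]
    simp only [Function.iterate_succ_apply', ih, map_sum, map_nsmul, Derivation.leibniz, smul_add,
      Finset.sum_add_distrib, smul_eq_mul]
    congr 1
    refine Finset.sum_congr rfl fun x hx => ?_
    rw [mul_comm]
    congr 1
    rw [← (Finset.HasAntidiagonal.mem_antidiagonal.1 hx)]
    exact Nat.choose_symm_add.symm ▸ rfl

theorem DD_mul [CharZero K] (h1 : DD D k g) (h2 : DD D l h) : DD D (k + l) (g * h) := by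
  constructor
  · rw [iter_leibniz, Finset.sum_eq_single (k, l)]
    · simp only [nsmul_eq_mul]
      refine mul_ne_zero ?_ (mul_ne_zero h1.1 h2.1)
      exact_mod_cast (Nat.choose_pos (Nat.le_add_right k l)).ne'
    · intro x hx hne
      rw [Finset.HasAntidiagonal.mem_antidiagonal] at hx
      by_cases hlt : k < x.1
      · rw [iter_zero_of_le D hlt h1.2]; simp
      · have : l < x.2 := by
          by_contra h3
          apply hne
          ext <;> simp <;> omega
        rw [iter_zero_of_le D this h2.2]; simp
    · simp
  · rw [iter_leibniz]
    refine Finset.sum_eq_zero fun x hx => ?_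
    rw [Finset.HasAntidiagonal.mem_antidiagonal] at hx
    by_cases hlt : k < x.1
    · rw [iter_zero_of_le D hlt h1.2]; simp
    · have : l < x.2 := by omega
      rw [iter_zero_of_le D this h2.2]; simp

theorem DD_zero (hg : g ≠ 0) (hD : D g = 0) : DD D 0 g := ⟨by simpa, by simpa⟩

/-- the kernel is factorially closed -/
theorem ker_factor [CharZero K] (hD : LN D) (h0 : g * h ≠ 0) (hk : D (g * h) = 0) :
    D g = 0 ∧ D h = 0 := by
  obtain ⟨k, hk1⟩ := DD_exists hD (left_ne_zero_of_mul h0)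
  obtain ⟨l, hl1⟩ := DD_exists hD (right_ne_zero_of_mul h0)
  have := DD_unique (DD_mul hk1 hl1) (DD_zero h0 hk)
  have e1 : k = 0 := by omega
  have e2 : l = 0 := by omega
  subst e1 e2
  exact ⟨by simpa using hk1.2, by simpa using hl1.2⟩

theorem ker_pow [CharZero K] (hD : LN D) (h0 : g ≠ 0) {n : ℕ} (hn : n ≠ 0) (hk : D (g ^ n) = 0) :
    D g = 0 := by
  obtain ⟨n, rfl⟩ := Nat.exists_eq_succ_of_ne_zero hn
  rw [Nat.succ_eq_add_one, pow_succ] at hk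
  exact (ker_factor hD (mul_ne_zero (pow_ne_zero _ h0) h0) hk).2

theorem DD_deriv (h1 : DD D (k + 1) g) : DD D k (D g) := by
  constructor
  · rw [← Function.iterate_succ_apply]; exact h1.1
  · rw [← Function.iterate_succ_apply]; exact h1.2

/-- If `h ∣ D g` and `D g ≠ 0` then the degree of `h` is smaller than the degree of `g`. -/
theorem DD_lt_of_dvd [CharZero K] (hD : LN D) (hg : DD D k g) (hh : DD D l h) (h0 : D g ≠ 0)
    (hd : h ∣ D g) : l < k := by
  obtain ⟨k', rfl⟩ : ∃ k', k = k' + 1 := by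
    refine Nat.exists_eq_succ_of_ne_zero ?_
    rintro rfl
    exact h0 (by simpa using hg.2)
  obtain ⟨s, hs⟩ := hd
  obtain ⟨j, hj⟩ := DD_exists hD (g := s) (by rintro rfl; simp [hs] at h0)
  have h1 := DD_mul hh hj
  rw [← hs] at h1
  have := DD_unique h1 (DD_deriv hg)
  omega

theorem LN_of_monomial (hD : ∀ m (c : K), ∃ k : ℕ, D^[k] (monomial m c) = 0) : LN D := by
  intro g
  induction g using MvPolynomial.monomial_add_induction_on with
  | C a => exact hD 0 a
  | monomial_add m c g _ _ ih =>
    obtain ⟨k, hk⟩ := ih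
    obtain ⟨l, hl⟩ := hD m c
    refine ⟨k + l, ?_⟩
    rw [iterate_map_add, iter_zero_of_le D (by omega) hk, iter_zero_of_le D (by omega) hl, add_zero]

theorem LN_pderiv (i : Fin 2) : LN (pderiv i : Derivation K (MvPolynomial (Fin 2) K) _) := by
  apply LN_of_monomial
  intro m c
  suffices ∀ (t : ℕ) m (c : K), m i < t → (pderiv i)^[t] (monomial m c) = 0 from
    ⟨m i + 1, this _ m c (by omega)⟩
  intro t
  induction t with
  | zero => intro m c h; omega
  | succ t ih =>
    intro m c h
    rw [Function.iterate_succ_apply, pderiv_monomial]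
    by_cases h0 : m i = 0
    · simp [h0]
    · apply ih
      simp; omega

/-- conjugate of a derivation by an automorphism -/
noncomputable def conjD (F : MvPolynomial (Fin 2) K ≃ₐ[K] MvPolynomial (Fin 2) K)
    (D : Derivation K (MvPolynomial (Fin 2) K) (MvPolynomial (Fin 2) K)) :
    Derivation K (MvPolynomial (Fin 2) K) (MvPolynomial (Fin 2) K) :=
  Derivation.mk' (F.toLinearMap ∘ₗ D.toLinearMap ∘ₗ F.symm.toLinearMap) (by
    intro a b
    simp)

theorem conjD_apply (F : MvPolynomial (Fin 2) K ≃ₐ[K] MvPolynomial (Fin 2) K)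
    (g : MvPolynomial (Fin 2) K) : conjD F D g = F (D (F.symm g)) := rfl

theorem LN_conjD (F : MvPolynomial (Fin 2) K ≃ₐ[K] MvPolynomial (Fin 2) K) (hD : LN D) :
    LN (conjD F D) := by
  intro g
  obtain ⟨k, hk⟩ := hD (F.symm g)
  refine ⟨k, ?_⟩
  have : ∀ k, (conjD F D)^[k] g = F (D^[k] (F.symm g)) := by
    intro k
    induction k with
    | zero => simp
    | succ k ih => rw [Function.iterate_succ_apply', ih, Function.iterate_succ_apply', conjD_apply]; simp
  rw [this, hk, map_zero]

/-- The leading part of a locally nilpotent derivation. -/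
theorem exists_gr (a b : ℤ) (hD : LN D) (h0 : D ≠ 0) :
    ∃ (d : Derivation K (MvPolynomial (Fin 2) K) (MvPolynomial (Fin 2) K)) (δ : ℤ),
      d ≠ 0 ∧ LN d ∧ ∀ N g g₀, Lead a b N g g₀ → Lead a b (N + δ) (D g) (d g₀) := by
  have main : ∃ δ x₀ y₀, Lead a b (a + δ) (D (X 0)) x₀ ∧ Lead a b (b + δ) (D (X 1)) y₀ ∧
      (x₀ ≠ 0 ∨ y₀ ≠ 0) := by
    by_cases hx : D (X 0) = 0
    · have hy : D (X 1) ≠ 0 := by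
        intro hy
        apply h0
        apply MvPolynomial.derivation_ext
        intro i
        fin_cases i <;> simp [hx, hy]
      obtain ⟨N, y₀, hy0, hL, -⟩ := exists_lead a b hy
      refine ⟨N - b, 0, y₀, ?_, by simpa using hL, Or.inr hy0⟩
      rw [hx]; exact Lead.of_lt (zero_mem _)
    · obtain ⟨N, x₀, hx0, hL, -⟩ := exists_lead a b hx
      by_cases hy : D (X 1) ∈ SS K a b (Set.Iic (b + (N - a)))
      · obtain ⟨y₀, hy0⟩ := exists_lead_of_le _ hy
        exact ⟨N - a, x₀, y₀, by simpa using hL, hy0, Or.inl hx0⟩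
      · have hy' : D (X 1) ≠ 0 := by rintro h; rw [h] at hy; exact hy (zero_mem _)
        obtain ⟨M, y₀, hy0, hM, -⟩ := exists_lead a b hy'
        have hlt : b + (N - a) < M := by
          by_contra hle
          push Not at hle
          exact hy (SS_mono (Set.Iic_subset_Iic.2 hle) hM.le)
        refine ⟨M - b, 0, y₀, ?_, by simpa using hM, Or.inr hy0⟩
        apply Lead.of_lt
        exact SS_mono (fun x hx => by simp only [Set.mem_Iic, Set.mem_Iio] at *; linarith) hL.le
  obtain ⟨δ, x₀, y₀, hx, hy, hne⟩ := main
  set d : Derivation K (MvPolynomial (Fin 2) K) (MvPolynomial (Fin 2) K) :=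
    mkDerivation K ![x₀, y₀] with hd
  have hd0 : d (X 0) = x₀ := by simp [hd, mkDerivation_X]
  have hd1 : d (X 1) = y₀ := by simp [hd, mkDerivation_X]
  have hL : ∀ N g g₀, Lead a b N g g₀ → Lead a b (N + δ) (D g) (d g₀) := by
    intro N g g₀ h
    rw [deriv_eq D, deriv_eq d, hd0, hd1]
    have h1 := h.pderiv0.mul hx
    have h2 := h.pderiv1.mul hy
    rw [show N - a + (a + δ) = N + δ by ring] at h1
    rw [show N - b + (b + δ) = N + δ by ring] at h2
    exact h1.add h2
  refine ⟨d, δ, ?_, ?_, hL⟩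
  · intro h
    rw [h] at hd0 hd1
    rcases hne with h' | h'
    · exact h' (by simpa using hd0.symm)
    · exact h' (by simpa using hd1.symm)
  · apply LN_of_monomial
    intro m c
    obtain ⟨k, hk⟩ := hD (monomial m c)
    refine ⟨k, ?_⟩
    have : ∀ k : ℕ, Lead a b (wt a b m + k * δ) (D^[k] (monomial m c)) (d^[k] (monomial m c)) := by
      intro k
      induction k with
      | zero => simpa using Lead.of_hom (SS_monomial _ _ (by simp))
      | succ k ih =>
        rw [Function.iterate_succ_apply', Function.iterate_succ_apply']
        convert hL _ _ _ ih using 1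
        push_cast; ring
    have h2 := this k
    rw [hk] at h2
    exact h2.eq_zero (zero_mem _)

end LND

end Ver

namespace Ver

section Factor

variable {K : Type*} [Field K]

theorem X_dvd_of_coeff {g : MvPolynomial (Fin 2) K} {i : Fin 2}
    (h : ∀ m, coeff m g ≠ 0 → m i ≠ 0) : X i ∣ g := by
  rw [g.as_sum]
  refine Finset.dvd_sum fun m hm => ?_
  rw [X_dvd_monomial]
  exact Or.inr (h m (by simpa using hm))

theorem pderiv_eq_zero [CharZero K] {g : MvPolynomial (Fin 2) K} {i : Fin 2}
    (h : pderiv i g = 0) : ∀ m, coeff m g ≠ 0 → m i = 0 := by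
  intro m hm
  by_contra h0
  have h1 : coeff (m - Finsupp.single i 1) (pderiv i g) = 0 := by simp [h]
  have h2 : m - Finsupp.single i 1 + Finsupp.single i 1 = m := by
    ext j
    by_cases hj : j = i
    · subst hj; simp; omega
    · simp [Ne.symm hj]
  rw [coeff_pderiv, h2] at h1
  rcases mul_eq_zero.1 h1 with h3 | h3
  · exact hm h3
  · have : ((m i - 1 + 1 : ℕ) : K) = 0 := by simpa using h3
    exact Nat.cast_ne_zero.2 (Nat.succ_ne_zero (m i - 1)) this

theorem fin2_ext {m m' : Fin 2 →₀ ℕ} (h0 : m 0 = m' 0) (h1 : m 1 = m' 1) : m = m' := by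
  ext i; fin_cases i <;> simpa

theorem eval_monomial2 (α β c : K) (m : Fin 2 →₀ ℕ) :
    eval ![α, β] (monomial m c) = c * (α ^ m 0 * β ^ m 1) := by
  rw [eval_monomial, Finsupp.prod_fintype _ _ (by simp)]
  simp [Fin.prod_univ_two]

theorem monomial2 (m : Fin 2 →₀ ℕ) (c : K) :
    monomial m c = C c * (X 0 ^ m 0 * X 1 ^ m 1) := by
  rw [monomial_eq, Finsupp.prod_fintype _ _ (by simp)]
  simp [Fin.prod_univ_two]

theorem eval_ne_of_single {r : MvPolynomial (Fin 2) K} (hr : r ≠ 0) {α β : K} (hα : α ≠ 0)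
    (hβ : β ≠ 0) (h : ∀ m m', coeff m r ≠ 0 → coeff m' r ≠ 0 → m = m') : eval ![α, β] r ≠ 0 := by
  obtain ⟨m, hm⟩ := MvPolynomial.ne_zero_iff.1 hr
  have : r = monomial m (coeff m r) := by
    classical
    ext m'
    rw [coeff_monomial]
    split_ifs with h1
    · rw [h1]
    · by_contra h2
      exact h1 (h m m' hm h2)
  rw [this, eval_monomial2]
  exact mul_ne_zero hm (mul_ne_zero (pow_ne_zero _ hα) (pow_ne_zero _ hβ))

/-- a nonzero root of a weighted homogeneous polynomial gives a factor. -/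
theorem factor_of_root {r : MvPolynomial (Fin 2) K} (hr : r ≠ 0) {a b : ℕ} (ha : 0 < a)
    (hab : Nat.Coprime a b)
    (hhom : ∀ m m', coeff m r ≠ 0 → coeff m' r ≠ 0 → a * m 0 + b * m 1 = a * m' 0 + b * m' 1)
    {α β : K} (hα : α ≠ 0) (hβ : β ≠ 0) (hroot : eval ![α, β] r = 0) :
    (X 1 ^ a - C (β ^ a / α ^ b) * X 0 ^ b : MvPolynomial (Fin 2) K) ∣ r := by
  set c := β ^ a / α ^ b with hc
  set u : MvPolynomial (Fin 2) K := X 1 ^ a - C c * X 0 ^ b with hu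
  obtain ⟨m₀, hm₀, hmin⟩ := Finset.exists_min_image r.support (fun m => m 1) (by simpa using hr)
  have hm₀' : coeff m₀ r ≠ 0 := by simpa using hm₀
  have key : ∀ m ∈ r.support, ∃ s : K, u ∣ monomial m (coeff m r) - C s * (X 0 ^ m₀ 0 * X 1 ^ m₀ 1) := by
    intro m hm
    have hw := hhom m m₀ (by simpa using hm) hm₀'
    have hle := hmin m hm
    obtain ⟨t', ht'⟩ := Nat.exists_eq_add_of_le hle
    have h1 : a * m₀ 0 = a * m 0 + b * t' := by
      rw [ht'] at hw; linarith
    have h2 : a ∣ b * t' := by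
      rw [← Nat.dvd_add_right (dvd_mul_right a (m 0)), ← h1]; exact dvd_mul_right _ _
    obtain ⟨t, rfl⟩ := hab.dvd_of_dvd_mul_left h2
    have h3 : m₀ 0 = m 0 + b * t := by
      apply Nat.eq_of_mul_eq_mul_left ha
      rw [h1]; ring
    refine ⟨coeff m r * c ^ t, ?_⟩
    have h4 : u ∣ (X 1 ^ a) ^ t - (C c * X 0 ^ b) ^ t := sub_dvd_pow_sub_pow _ _ _
    have h5 : monomial m (coeff m r) - C (coeff m r * c ^ t) * (X 0 ^ m₀ 0 * X 1 ^ m₀ 1)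
        = C (coeff m r) * X 0 ^ m 0 * X 1 ^ m₀ 1 * ((X 1 ^ a) ^ t - (C c * X 0 ^ b) ^ t) := by
      rw [monomial2, ht', h3]
      simp only [map_mul, map_pow]
      ring
    rw [h5]
    exact Dvd.dvd.mul_left h4 _
  choose! s hs using key
  have h6 : u ∣ r - C (∑ m ∈ r.support, s m) * (X 0 ^ m₀ 0 * X 1 ^ m₀ 1) := by
    have : r - C (∑ m ∈ r.support, s m) * (X 0 ^ m₀ 0 * X 1 ^ m₀ 1)
        = ∑ m ∈ r.support, (monomial m (coeff m r) - C (s m) * (X 0 ^ m₀ 0 * X 1 ^ m₀ 1)) := by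
      rw [Finset.sum_sub_distrib, ← Finset.sum_mul, ← map_sum, ← r.as_sum]
    rw [this]
    exact Finset.dvd_sum hs
  have h7 : eval ![α, β] u = 0 := by
    simp [hu, hc]
    field_simp
    ring
  obtain ⟨w, hw⟩ := h6
  have h8 := congrArg (eval ![α, β]) hw
  rw [map_mul, h7, zero_mul, map_sub, hroot] at h8
  have h9 : ∑ m ∈ r.support, s m = 0 := by
    simpa [hα, hβ] using h8
  rw [h9] at hw
  exact ⟨w, by simpa using hw⟩

variable {d : Derivation K (MvPolynomial (Fin 2) K) (MvPolynomial (Fin 2) K)}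

theorem lemmaM [CharZero K] (hd : d ≠ 0) (hLN : LN d) {a b : ℕ} (ha : 0 < a) (hb : 0 < b)
    {r : MvPolynomial (Fin 2) K} (hr : r ≠ 0) {N : ℤ} (hhom : r ∈ SS K a b {N}) (hdr : d r = 0)
    {α β : K} (hα : α ≠ 0) (hβ : β ≠ 0) (hroot : eval ![α, β] r = 0) :
    ∃ (a' b' : ℕ) (c e : K) (k : ℕ), 0 < a' ∧ 0 < b' ∧ a * b' = b * a' ∧ (a' = 1 ∨ b' = 1) ∧
      c ≠ 0 ∧ e ≠ 0 ∧ 0 < k ∧ r = C e * (X 1 ^ a' - C c * X 0 ^ b') ^ k := by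
  obtain ⟨a', b', hcop, hga, hgb⟩ := Nat.exists_coprime a b
  have hg : 0 < Nat.gcd a b := Nat.gcd_pos_of_pos_left _ ha
  set g := Nat.gcd a b
  have ha' : 0 < a' := by rcases Nat.eq_zero_or_pos a' with h | h; (subst h; omega); exact h
  have hb' : 0 < b' := by rcases Nat.eq_zero_or_pos b' with h | h; (subst h; omega); exact h
  have hwt : ∀ m m', coeff m r ≠ 0 → coeff m' r ≠ 0 →
      a' * m 0 + b' * m 1 = a' * m' 0 + b' * m' 1 := by
    intro m m' hm hm'
    have h1 : wt a b m = N := hhom m hm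
    have h2 : wt a b m' = N := hhom m' hm'
    rw [← h2] at h1
    simp only [wt] at h1
    have h3 : a * m 0 + b * m 1 = a * m' 0 + b * m' 1 := by exact_mod_cast h1
    rw [hga, hgb] at h3
    apply Nat.eq_of_mul_eq_mul_left hg
    linarith
  -- both `d x` and `d y` are nonzero
  have hdx : d (X 0) ≠ 0 := by
    intro h0
    have h1 : d (X 1) ≠ 0 := by
      intro h1
      apply hd
      apply MvPolynomial.derivation_ext
      intro i
      fin_cases i <;> simp [h0, h1]
    rw [deriv_eq, h0, mul_zero, zero_add] at hdr
    have h2 := pderiv_eq_zero ((mul_eq_zero.1 hdr).resolve_right h1)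
    refine eval_ne_of_single hr hα hβ ?_ hroot
    intro m m' hm hm'
    have := hwt m m' hm hm'
    rw [h2 m hm, h2 m' hm'] at this
    refine fin2_ext ?_ (by rw [h2 m hm, h2 m' hm'])
    apply Nat.eq_of_mul_eq_mul_left ha'; linarith
  have hdy : d (X 1) ≠ 0 := by
    intro h1
    rw [deriv_eq, h1, mul_zero, add_zero] at hdr
    have h2 := pderiv_eq_zero ((mul_eq_zero.1 hdr).resolve_right hdx)
    refine eval_ne_of_single hr hα hβ ?_ hroot
    intro m m' hm hm'
    have := hwt m m' hm hm'
    rw [h2 m hm, h2 m' hm'] at this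
    refine fin2_ext (by rw [h2 m hm, h2 m' hm']) ?_
    apply Nat.eq_of_mul_eq_mul_left hb'; linarith
  have hndx : ∀ s, s ≠ 0 → d s = 0 → ¬ X 0 ∣ s := by
    rintro s hs hds ⟨t, rfl⟩
    exact hdx (ker_factor hLN hs hds).1
  have hndy : ∀ s, s ≠ 0 → d s = 0 → ¬ X 1 ∣ s := by
    rintro s hs hds ⟨t, rfl⟩
    exact hdy (ker_factor hLN hs hds).1
  set c := β ^ a' / α ^ b' with hc
  have hc0 : c ≠ 0 := div_ne_zero (pow_ne_zero _ hβ) (pow_ne_zero _ hα)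
  set u : MvPolynomial (Fin 2) K := X 1 ^ a' - C c * X 0 ^ b' with hu
  have hdu : d u = 0 := by
    obtain ⟨s, hs⟩ := factor_of_root hr ha' hcop hwt hα hβ hroot
    rw [hs] at hdr hr
    exact (ker_factor hLN hr hdr).1
  obtain ⟨m, hm, hm0⟩ : ∃ m, coeff m r ≠ 0 ∧ m 0 = 0 := by
    by_contra! h
    exact hndx r hr hdr (X_dvd_of_coeff h)
  obtain ⟨m', hm', hm1⟩ : ∃ m, coeff m r ≠ 0 ∧ m 1 = 0 := by
    by_contra! h
    exact hndy r hr hdr (X_dvd_of_coeff h)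
  have h1 := hwt m m' hm hm'
  rw [hm0, hm1] at h1
  simp only [mul_zero, zero_add, add_zero] at h1
  obtain ⟨k, hk⟩ : a' ∣ m 1 := hcop.dvd_of_dvd_mul_left (by rw [h1]; exact dvd_mul_right _ _)
  have hfin : r = C (coeff m r) * u ^ k := by
    by_contra hne
    have hne' : r - C (coeff m r) * u ^ k ≠ 0 := sub_ne_zero.2 hne
    refine hndx _ hne' ?_ ?_
    · rw [map_sub, hdr, Derivation.leibniz, Derivation.leibniz_pow, hdu]
      simp [← MvPolynomial.algebraMap_eq]
    · have h2 : (X 0 : MvPolynomial (Fin 2) K) ∣ u ^ k - (X 1 ^ a') ^ k := by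
        refine dvd_trans ?_ (sub_dvd_pow_sub_pow _ _ _)
        refine ⟨- (C c * X 0 ^ (b' - 1)), ?_⟩
        rw [hu]
        obtain ⟨b'', rfl⟩ := Nat.exists_eq_succ_of_ne_zero hb'.ne'
        simp [pow_succ]; ring
      have h3 : (X 0 : MvPolynomial (Fin 2) K) ∣ r - C (coeff m r) * X 1 ^ m 1 := by
        classical
        apply X_dvd_of_coeff
        intro m₁ hm₁ h0
        have hmm : m = Finsupp.single 1 (m 1) := fin2_ext (by simpa using hm0) (by simp)
        apply hm₁
        rw [coeff_sub, coeff_C_mul, coeff_X_pow]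
        by_cases h4 : coeff m₁ r = 0
        · have : Finsupp.single 1 (m 1) ≠ m₁ := by
            rw [← hmm]; rintro rfl; exact hm h4
          simp [h4, this]
        · have h5 := hwt m₁ m h4 hm
          rw [h0, hm0] at h5
          have h6 : m₁ = m := fin2_ext (by rw [h0, hm0])
            (Nat.eq_of_mul_eq_mul_left hb' (by linarith))
          rw [h6, ← hmm]; simp
      have h4 : r - C (coeff m r) * u ^ k = (r - C (coeff m r) * X 1 ^ m 1)
          - C (coeff m r) * (u ^ k - (X 1 ^ a') ^ k) := by
        rw [hk, pow_mul]; ring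
      rw [h4]
      exact dvd_sub h3 (Dvd.dvd.mul_left h2 _)
  refine ⟨a', b', c, coeff m r, k, ha', hb', ?_, ?_, hc0, hm, ?_, hfin⟩
  · rw [hga, hgb]; ring
  · by_contra! hcon
    have ha2 : 2 ≤ a' := by omega
    have hb2 : 2 ≤ b' := by omega
    have hdC : d (C c) = 0 := by
      rw [← MvPolynomial.algebraMap_eq]; exact d.map_algebraMap c
    have heq : C (a' : K) * X 1 ^ (a' - 1) * d (X 1) = C (c * b') * X 0 ^ (b' - 1) * d (X 0) := by
      rw [hu, map_sub, sub_eq_zero, Derivation.leibniz, Derivation.leibniz_pow,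
        Derivation.leibniz_pow, hdC] at hdu
      simp only [smul_eq_mul, nsmul_eq_mul, mul_zero, add_zero] at hdu
      rw [map_mul, map_natCast, map_natCast, mul_assoc, hdu]; ring
    have hprime : ∀ i : Fin 2, Prime (X i : MvPolynomial (Fin 2) K) := fun i => X_prime
    have hXX : ∀ i j : Fin 2, i ≠ j → ¬ (X i : MvPolynomial (Fin 2) K) ∣ X j := by
      intro i j hij h
      rw [X_dvd_X] at h
      exact hij h
    have hXC : ∀ (i : Fin 2) (c : K), c ≠ 0 → ¬ (X i : MvPolynomial (Fin 2) K) ∣ C c := by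
      intro i c hc h
      rw [C_apply, X_dvd_monomial] at h
      simp [hc] at h
    have hydx : (X 1 : MvPolynomial (Fin 2) K) ∣ d (X 0) := by
      have h2 : (X 1 : MvPolynomial (Fin 2) K) ∣ C (c * b') * X 0 ^ (b' - 1) * d (X 0) := by
        rw [← heq]
        exact Dvd.dvd.mul_right (Dvd.dvd.mul_left (dvd_pow_self _ (by omega)) _) _
      rcases (hprime 1).dvd_or_dvd h2 with h3 | h3
      · rcases (hprime 1).dvd_or_dvd h3 with h4 | h4
        · exact absurd h4 (hXC _ _ (mul_ne_zero hc0 (by exact_mod_cast hb'.ne')))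
        · exact absurd ((hprime 1).dvd_of_dvd_pow h4) (hXX _ _ (by decide))
      · exact h3
    have hxdy : (X 0 : MvPolynomial (Fin 2) K) ∣ d (X 1) := by
      have h2 : (X 0 : MvPolynomial (Fin 2) K) ∣ C (a' : K) * X 1 ^ (a' - 1) * d (X 1) := by
        rw [heq]
        exact Dvd.dvd.mul_right (Dvd.dvd.mul_left (dvd_pow_self _ (by omega)) _) _
      rcases (hprime 0).dvd_or_dvd h2 with h3 | h3
      · rcases (hprime 0).dvd_or_dvd h3 with h4 | h4
        · exact absurd h4 (hXC _ _ (by exact_mod_cast ha'.ne'))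
        · exact absurd ((hprime 0).dvd_of_dvd_pow h4) (hXX _ _ (by decide))
      · exact h3
    obtain ⟨i, hi⟩ := DD_exists hLN (g := (X 0 : MvPolynomial (Fin 2) K)) (X_ne_zero _)
    obtain ⟨j, hj⟩ := DD_exists hLN (g := (X 1 : MvPolynomial (Fin 2) K)) (X_ne_zero _)
    have := DD_lt_of_dvd hLN hi hj hdx hydx
    have := DD_lt_of_dvd hLN hj hi hdy hxdy
    omega
  · rcases Nat.eq_zero_or_pos k with h | h
    · rw [h] at hfin
      rw [hfin] at hroot
      simp at hroot
      exact absurd hroot hm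
    · exact h

/-- automorphism as substitution -/
theorem alg_eq_aeval (G : MvPolynomial (Fin 2) K ≃ₐ[K] MvPolynomial (Fin 2) K)
    (T : MvPolynomial (Fin 2) K) : G T = aeval ![G (X 0), G (X 1)] T := by
  have : G.toAlgHom = aeval ![G (X 0), G (X 1)] := by
    apply MvPolynomial.algHom_ext
    intro i
    fin_cases i <;> simp
  exact congrArg (fun φ : MvPolynomial (Fin 2) K →ₐ[K] MvPolynomial (Fin 2) K => φ T) this

theorem lemmaN [CharZero K] (F : MvPolynomial (Fin 2) K ≃ₐ[K] MvPolynomial (Fin 2) K)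
    (i : Fin 2) {a b : ℕ} (ha : 0 < a) (hb : 0 < b) {p q T₀ : MvPolynomial (Fin 2) K}
    (hp : Lead 1 1 a (F.symm (X 0)) p) (hq : Lead 1 1 b (F.symm (X 1)) q)
    (hp0 : p ≠ 0) (hq0 : q ≠ 0) {N : ℤ} (hT : Lead a b N (F (X i)) T₀) (hT0 : T₀ ≠ 0)
    (hN : 1 < N) :
    ∃ (a' b' : ℕ) (c e : K) (k : ℕ), 0 < a' ∧ 0 < b' ∧ a * b' = b * a' ∧ (a' = 1 ∨ b' = 1) ∧
      c ≠ 0 ∧ e ≠ 0 ∧ 0 < k ∧ T₀ = C e * (X 1 ^ a' - C c * X 0 ^ b') ^ k ∧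
      q ^ a' = C c * p ^ b' := by
  have h1 := hT.comp hp hq
  rw [← alg_eq_aeval F.symm, AlgEquiv.symm_apply_apply] at h1
  have h2 : aeval ![p, q] T₀ = 0 := by
    apply h1.eq_zero
    have : ∀ i : Fin 2, (X i : MvPolynomial (Fin 2) K) ∈ SS K 1 1 (Set.Iio N) := by
      intro i
      fin_cases i
      · exact SS_X0 (by simpa using hN)
      · exact SS_X1 (by simpa using hN)
    exact this i
  obtain ⟨j, hj⟩ : ∃ j : Fin 2, j ≠ i := by
    fin_cases i
    · exact ⟨1, by decide⟩
    · exact ⟨0, by decide⟩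
  have hD : LN (conjD F (pderiv j)) := LN_conjD F (LN_pderiv j)
  have hDne : conjD F (pderiv j) ≠ 0 := by
    intro h
    have h3 : conjD F (pderiv j) (F (X j)) = 0 := by rw [h]; rfl
    rw [conjD_apply] at h3
    simp at h3
  obtain ⟨d, δ, hd, hLN, hL⟩ := exists_gr (a : ℤ) (b : ℤ) hD hDne
  have hdT : d T₀ = 0 := by
    have h3 := hL _ _ _ hT
    have h4 : conjD F (pderiv j) (F (X i)) = 0 := by
      rw [conjD_apply]
      simp [pderiv_X_of_ne hj.symm]
    rw [h4] at h3
    exact h3.eq_zero (zero_mem _)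
  -- a point where `p` and `q` do not vanish
  obtain ⟨z, hz⟩ : ∃ z, eval z (p * q) ≠ 0 := by
    by_contra! h
    exact mul_ne_zero hp0 hq0 (MvPolynomial.funext (by simpa using h))
  rw [map_mul] at hz
  have hroot : eval ![eval z p, eval z q] T₀ = 0 := by
    have h3 := congrArg (eval z) h2
    rw [map_zero] at h3
    rw [← h3, aeval_eq_sum2, map_sum]
    conv_lhs => rw [T₀.as_sum, map_sum]
    refine Finset.sum_congr rfl fun m _ => ?_
    rw [eval_monomial2]; simp
  obtain ⟨a', b', c, e, k, h3, h4, h5, h6, h7, h8, h9, h10⟩ := lemmaM hd hLN ha hb hT0 hT.1 hdT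
    (left_ne_zero_of_mul hz) (right_ne_zero_of_mul hz) hroot
  refine ⟨a', b', c, e, k, h3, h4, h5, h6, h7, h8, h9, h10, ?_⟩
  rw [h10] at h2
  simp [h8, MvPolynomial.algebraMap_eq] at h2
  exact sub_eq_zero.1 h2.1

end Factor

end Ver

namespace Ver

section Group

variable {K : Type*} [Field K]

/-- the scaling `x ↦ ζ x`, `y ↦ ζ y` -/
noncomputable def sc (ζ : K) : MvPolynomial (Fin 2) K →ₐ[K] MvPolynomial (Fin 2) K :=
  aeval ![C ζ * X 0, C ζ * X 1]

theorem sc_X (ζ : K) (i : Fin 2) : sc ζ (X i) = C ζ * X i := by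
  fin_cases i <;> simp [sc]

theorem coeff_sc (ζ : K) (p : MvPolynomial (Fin 2) K) (m : Fin 2 →₀ ℕ) :
    coeff m (sc ζ p) = ζ ^ (m 0 + m 1) * coeff m p := by
  classical
  induction p using MvPolynomial.induction_on' with
  | add p q hp hq => simp [hp, hq, mul_add]
  | monomial n a =>
    have : sc ζ (monomial n a) = C (ζ ^ (n 0 + n 1)) * monomial n a := by
      rw [sc, aeval_monomial2, monomial2]
      simp only [mul_pow, map_pow]; ring
    rw [this, coeff_C_mul, coeff_monomial]
    split_ifs with h
    · rw [h]
    · simp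

/-- automorphisms commuting with the scaling -/
def Com (ζ : K) (F : MvPolynomial (Fin 2) K ≃ₐ[K] MvPolynomial (Fin 2) K) : Prop :=
  ∀ p, F (sc ζ p) = sc ζ (F p)

variable {ζ : K} {F G : MvPolynomial (Fin 2) K ≃ₐ[K] MvPolynomial (Fin 2) K}

theorem Com.mul (hF : Com ζ F) (hG : Com ζ G) : Com ζ (F * G) := by
  intro p
  rw [AlgEquiv.mul_apply, AlgEquiv.mul_apply, hG, hF]

theorem Com.symm (hF : Com ζ F) : Com ζ F.symm := by
  intro p
  apply F.injective
  rw [hF]; simp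

theorem Com.inv (hF : Com ζ F) : Com ζ F⁻¹ := hF.symm

theorem Com.of_X (h : ∀ i, sc ζ (F (X i)) = C ζ * F (X i)) : Com ζ F := by
  intro p
  have : (F : MvPolynomial (Fin 2) K →ₐ[K] MvPolynomial (Fin 2) K).comp (sc ζ) =
      (sc ζ).comp (F : MvPolynomial (Fin 2) K →ₐ[K] MvPolynomial (Fin 2) K) := by
    apply MvPolynomial.algHom_ext
    intro i
    have h2 : F (C ζ) = C ζ := by
      rw [← MvPolynomial.algebraMap_eq]; exact F.commutes ζ
    simp [sc_X, h, h2]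
  exact congrArg (fun φ : MvPolynomial (Fin 2) K →ₐ[K] MvPolynomial (Fin 2) K => φ p) this

theorem aut_C (F : MvPolynomial (Fin 2) K ≃ₐ[K] MvPolynomial (Fin 2) K) (c : K) :
    F (C c) = C c := by
  rw [← MvPolynomial.algebraMap_eq]; exact F.commutes c

theorem Com.coeff (hF : Com ζ F) (i : Fin 2) (m : Fin 2 →₀ ℕ) (hm : coeff m (F (X i)) ≠ 0) :
    ζ ^ (m 0 + m 1) = ζ := by
  have h := hF (X i)
  rw [sc_X, map_mul, aut_C] at h
  have h2 := congrArg (MvPolynomial.coeff m) h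
  rw [coeff_C_mul, coeff_sc] at h2
  exact (mul_right_cancel₀ hm h2).symm

theorem Com.lead_pow (hF : Com ζ F) {i : Fin 2} {n : ℕ} {p₀ : MvPolynomial (Fin 2) K}
    (h : Lead 1 1 n (F (X i)) p₀) (h0 : p₀ ≠ 0) : ζ ^ n = ζ := by
  obtain ⟨m, hm⟩ := MvPolynomial.ne_zero_iff.1 h0
  have h1 : wt 1 1 m = n := h.1 m hm
  have h2 : MvPolynomial.coeff m (F (X i) - p₀) = 0 := by
    by_contra hne
    have := h.2 m hne
    rw [h1] at this
    simp at this
  rw [coeff_sub, sub_eq_zero] at h2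
  have h3 := hF.coeff i m (by rw [h2]; exact hm)
  have h4 : m 0 + m 1 = n := by simp [wt] at h1; exact_mod_cast h1
  rw [← h4, h3]

/-- elementary automorphism `x ↦ x`, `y ↦ y + c x^v` -/
noncomputable def eps (c : K) (v : ℕ) :
    MvPolynomial (Fin 2) K ≃ₐ[K] MvPolynomial (Fin 2) K :=
  AlgEquiv.ofAlgHom (aeval ![X 0, X 1 + C c * X 0 ^ v]) (aeval ![X 0, X 1 - C c * X 0 ^ v])
    (by apply MvPolynomial.algHom_ext; intro i; fin_cases i <;> simp [MvPolynomial.algebraMap_eq])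
    (by apply MvPolynomial.algHom_ext; intro i; fin_cases i <;> simp [MvPolynomial.algebraMap_eq])

theorem eps_apply (c : K) (v : ℕ) (p : MvPolynomial (Fin 2) K) :
    eps c v p = aeval ![X 0, X 1 + C c * X 0 ^ v] p := rfl

theorem eps_symm_apply (c : K) (v : ℕ) (p : MvPolynomial (Fin 2) K) :
    (eps c v).symm p = aeval ![X 0, X 1 - C c * X 0 ^ v] p := rfl

theorem eps_X0 (c : K) (v : ℕ) : eps c v (X 0) = X 0 := by simp [eps_apply]
theorem eps_X1 (c : K) (v : ℕ) : eps c v (X 1) = X 1 + C c * X 0 ^ v := by simp [eps_apply]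
theorem eps_symm_X0 (c : K) (v : ℕ) : (eps c v).symm (X 0) = X 0 := by simp [eps_symm_apply]
theorem eps_symm_X1 (c : K) (v : ℕ) : (eps c v).symm (X 1) = X 1 - C c * X 0 ^ v := by
  simp [eps_symm_apply]

theorem Com_eps (c : K) {v : ℕ} (h : ζ ^ v = ζ) : Com ζ (eps c v) := by
  apply Com.of_X
  intro i
  have h2 : sc ζ (C c) = C c := by rw [← MvPolynomial.algebraMap_eq]; exact (sc ζ).commutes c
  fin_cases i
  · simp [eps_X0, sc_X]
  · simp only [Fin.mk_one, eps_X1, map_add, map_mul, map_pow, sc_X, h2, mul_pow]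
    rw [← map_pow, h]; ring

/-- the swap -/
noncomputable def swp : MvPolynomial (Fin 2) K ≃ₐ[K] MvPolynomial (Fin 2) K :=
  AlgEquiv.ofAlgHom (aeval ![X 1, X 0]) (aeval ![X 1, X 0])
    (by apply MvPolynomial.algHom_ext; intro i; fin_cases i <;> simp)
    (by apply MvPolynomial.algHom_ext; intro i; fin_cases i <;> simp)

theorem swp_apply (p : MvPolynomial (Fin 2) K) : swp p = aeval ![X 1, X 0] p := rfl
theorem swp_symm_apply (p : MvPolynomial (Fin 2) K) : swp.symm p = aeval ![X 1, X 0] p := rfl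
theorem swp_X0 : swp (X 0 : MvPolynomial (Fin 2) K) = X 1 := by simp [swp_apply]
theorem swp_X1 : swp (X 1 : MvPolynomial (Fin 2) K) = X 0 := by simp [swp_apply]
theorem swp_symm_X0 : swp.symm (X 0 : MvPolynomial (Fin 2) K) = X 1 := by simp [swp_symm_apply]
theorem swp_symm_X1 : swp.symm (X 1 : MvPolynomial (Fin 2) K) = X 0 := by simp [swp_symm_apply]

theorem Com_swp : Com ζ (swp : MvPolynomial (Fin 2) K ≃ₐ[K] _) := by
  apply Com.of_X
  intro i
  fin_cases i
  · simp [swp_X0, sc_X]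
  · simp [swp_X1, sc_X]

/-- linearizable by an automorphism commuting with the scaling -/
def Lin (ζ : K) (F : MvPolynomial (Fin 2) K ≃ₐ[K] MvPolynomial (Fin 2) K) : Prop :=
  ∃ φ, Com ζ φ ∧ IsLinearAut K (φ⁻¹ * F * φ)

theorem Lin_conj (hG : Com ζ G) (h : Lin ζ (G * F * G⁻¹)) : Lin ζ F := by
  obtain ⟨φ, h1, h2⟩ := h
  refine ⟨G⁻¹ * φ, hG.inv.mul h1, ?_⟩
  convert h2 using 1
  group

def FinOrd (F : MvPolynomial (Fin 2) K ≃ₐ[K] MvPolynomial (Fin 2) K) : Prop :=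
  ∃ M : ℕ, 0 < M ∧ F ^ M = 1

theorem FinOrd.conj (h : FinOrd F) : FinOrd (G * F * G⁻¹) := by
  obtain ⟨M, h1, h2⟩ := h
  exact ⟨M, h1, by rw [conj_pow, h2]; simp⟩

theorem aut_X_ne (F : MvPolynomial (Fin 2) K ≃ₐ[K] MvPolynomial (Fin 2) K) (i : Fin 2) :
    F (X i) ≠ 0 := by
  rw [Ne, EmbeddingLike.map_eq_zero_iff]; exact X_ne_zero _

theorem linear_form {p : MvPolynomial (Fin 2) K} (hp : p ∈ SS K 1 1 (Set.Iic 1))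
    (h0 : coeff 0 p = 0) :
    p = C (coeff (Finsupp.single 0 1) p) * X 0 + C (coeff (Finsupp.single 1 1) p) * X 1 := by
  classical
  ext m
  rw [coeff_add, coeff_C_mul, coeff_C_mul, coeff_X', coeff_X']
  have hne : (Finsupp.single 0 1 : Fin 2 →₀ ℕ) ≠ Finsupp.single 1 1 := by
    intro h
    have := DFunLike.congr_fun h 0
    simp at this
  by_cases h1 : Finsupp.single 0 1 = m
  · subst h1; simp [hne.symm]
  by_cases h2 : Finsupp.single 1 1 = m
  · subst h2; simp [hne]
  simp only [h1, h2, if_false, mul_zero, add_zero]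
  by_contra hm
  have h3 := hp m hm
  simp only [wt, one_mul, Set.mem_Iic] at h3
  have h4 : m 0 + m 1 ≤ 1 := by exact_mod_cast h3
  have h5 : m 0 + m 1 ≠ 0 := by
    intro h
    have : m = 0 := fin2_ext (by simp; omega) (by simp; omega)
    rw [this] at hm
    exact hm h0
  rcases Nat.eq_zero_or_pos (m 0) with h6 | h6
  · exact h2 (fin2_ext (by simp [h6]) (by simp; omega))
  · exact h1 (fin2_ext (by simp; omega) (by simp; omega))

theorem Com.coeff_zero (hζ : ζ ≠ 1) (hF : Com ζ F) (i : Fin 2) :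
    MvPolynomial.coeff 0 (F (X i)) = 0 := by
  by_contra h
  exact hζ (by simpa using (hF.coeff i 0 h).symm)

theorem linear_case (hζ : ζ ≠ 1) (hF : Com ζ F) (h : ∀ i, F (X i) ∈ SS K 1 1 (Set.Iic 1)) :
    IsLinearAut K F := by
  have h0 := linear_form (h 0) (hF.coeff_zero hζ 0)
  have h1 := linear_form (h 1) (hF.coeff_zero hζ 1)
  set a := coeff (Finsupp.single 0 1) (F (X 0))
  set b := coeff (Finsupp.single 1 1) (F (X 0))
  set c := coeff (Finsupp.single 0 1) (F (X 1))
  set d := coeff (Finsupp.single 1 1) (F (X 1))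
  refine ⟨a, b, c, d, ?_, h0, h1⟩
  intro hdet
  have hne : (Finsupp.single 0 1 : Fin 2 →₀ ℕ) ≠ Finsupp.single 1 1 := by
    intro h
    have := DFunLike.congr_fun h 0
    simp at this
  have key : ∀ s t : K, C s * F (X 0) + C t * F (X 1) = 0 → s = 0 ∧ t = 0 := by
    classical
    intro s t hst
    have h2 : C s * X 0 + C t * X 1 = (0 : MvPolynomial (Fin 2) K) := by
      apply F.injective
      rw [map_add, map_mul, map_mul, aut_C, aut_C, hst, map_zero]
    constructor
    · simpa [coeff_X', hne.symm] using congrArg (MvPolynomial.coeff (Finsupp.single 0 1)) h2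
    · simpa [coeff_X', hne] using congrArg (MvPolynomial.coeff (Finsupp.single 1 1)) h2
  have hd' : C (a * d - b * c) = (0 : MvPolynomial (Fin 2) K) := by rw [hdet, C_0]
  simp only [map_sub, map_mul] at hd'
  have k1 := key d (-b) (by rw [h0, h1, C_neg]; linear_combination (X 0) * hd')
  have k2 := key (-c) a (by rw [h0, h1, C_neg]; linear_combination (X 1) * hd')
  have hb : b = 0 := by simpa using k1.2
  rw [k2.2, hb] at h0
  exact aut_X_ne F 0 (by simpa using h0)

/-- automorphisms of this shape have infinite order -/
theorem inf_order {d : ℕ} (hd : 2 ≤ d) {e : K} (he : e ≠ 0)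
    (h0 : Lead 1 1 d (F (X 0)) (C e * X 0 ^ d)) (h1 : F (X 1) ∈ SS K 1 1 (Set.Iic d)) :
    ¬ FinOrd F := by
  rintro ⟨M, hM, hFM⟩
  obtain ⟨q, hq⟩ := exists_lead_of_le _ h1
  have key : ∀ j : ℕ, ∃ e' : K, e' ≠ 0 ∧
      Lead 1 1 ((d ^ j : ℕ) : ℤ) ((F ^ j) (X 0)) (C e' * X 0 ^ (d ^ j)) := by
    intro j
    induction j with
    | zero =>
      refine ⟨1, one_ne_zero, ?_⟩
      simpa using Lead.of_hom (SS_X0 (by simp))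
    | succ j ih =>
      obtain ⟨e', he', h2⟩ := ih
      refine ⟨e' * e ^ (d ^ j), mul_ne_zero he' (pow_ne_zero _ he), ?_⟩
      have h3 : Lead d d ((d ^ (j + 1) : ℕ) : ℤ) ((F ^ j) (X 0)) (C e' * X 0 ^ (d ^ j)) := by
        constructor
        · refine SS_weights ?_ h2.1
          intro x y hxy
          simp only [one_mul, Set.mem_singleton_iff] at *
          rw [← mul_add, hxy]; push_cast; ring
        · refine SS_weights ?_ h2.2
          intro x y hxy
          simp only [one_mul, Set.mem_Iio] at *
          rw [← mul_add]
          have hd0 : (0 : ℤ) < d := by exact_mod_cast (by omega : 0 < d)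
          have := mul_lt_mul_of_pos_left hxy hd0
          push_cast at *
          rw [pow_succ]; linarith
      have h4 := h3.comp h0 hq
      rw [← alg_eq_aeval] at h4
      rw [show (F ^ (j + 1)) (X 0) = F ((F ^ j) (X 0)) by
        rw [pow_succ' F j, AlgEquiv.mul_apply]]
      convert h4 using 1
      simp [MvPolynomial.algebraMap_eq, mul_pow, pow_succ, pow_mul]
      ring
  obtain ⟨e', he', h2⟩ := key M
  rw [hFM, AlgEquiv.one_apply] at h2
  have h3 := h2.le_of_mem (M := 1) (by simp [he']) (SS_X0 (by simp))
  have h4 : d ^ M ≤ 1 := by exact_mod_cast h3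
  have h5 : 1 < d ^ M := Nat.one_lt_pow (by omega) (by omega)
  omega

end Group

end Ver

namespace Ver

section Step

variable {K : Type*} [Field K]

theorem SS_std_lt {v : ℕ} (hv : 1 ≤ v) {N : ℤ} {p : MvPolynomial (Fin 2) K}
    (hp : p ∈ SS K 1 v (Set.Iio N)) : p ∈ SS K 1 1 (Set.Iio N) := by
  refine SS_weights ?_ hp
  intro i j h
  simp only [Set.mem_Iio] at *
  have : (1 : ℤ) ≤ v := by exact_mod_cast hv
  nlinarith [Int.natCast_nonneg j]

theorem SS_std_le {v : ℕ} (hv : 1 ≤ v) {N : ℤ} {p : MvPolynomial (Fin 2) K}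
    (hp : p ∈ SS K 1 v (Set.Iic N)) : p ∈ SS K 1 1 (Set.Iic N) := by
  refine SS_weights ?_ hp
  intro i j h
  simp only [Set.mem_Iic] at *
  have : (1 : ℤ) ≤ v := by exact_mod_cast hv
  nlinarith [Int.natCast_nonneg j]

theorem X0_le (w : ℤ) : (X 0 : MvPolynomial (Fin 2) K) ∈ SS K 1 w (Set.Iic 1) := SS_X0 (by simp)

theorem X0pow_le (w : ℤ) (u : ℕ) {N : ℤ} (h : (u : ℤ) ≤ N) :
    (X 0 ^ u : MvPolynomial (Fin 2) K) ∈ SS K 1 w (Set.Iic N) :=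
  SS_mono (fun x hx => by simp at *; linarith) (SS_Iic_pow (X0_le w) u)

theorem epsX1_le (c : K) {u : ℕ} {w : ℤ} (h : (u : ℤ) ≤ w) :
    (X 1 + C c * X 0 ^ u : MvPolynomial (Fin 2) K) ∈ SS K 1 w (Set.Iic w) :=
  add_mem (SS_X1 (by simp)) (SS_C_mul _ (X0pow_le w u h))

theorem eps_lt (c : K) {u : ℕ} {w : ℤ} (h : (u : ℤ) ≤ w) {N : ℤ} {p : MvPolynomial (Fin 2) K}
    (hp : p ∈ SS K 1 w (Set.Iio N)) : eps c u p ∈ SS K 1 w (Set.Iio N) := by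
  rw [eps_apply]; exact SS_comp_lt (X0_le w) (epsX1_le c h) hp

theorem eps_le (c : K) {u : ℕ} {w : ℤ} (h : (u : ℤ) ≤ w) {N : ℤ} {p : MvPolynomial (Fin 2) K}
    (hp : p ∈ SS K 1 w (Set.Iic N)) : eps c u p ∈ SS K 1 w (Set.Iic N) := by
  rw [eps_apply]; exact SS_comp_le (X0_le w) (epsX1_le c h) hp

theorem Lead.trans_lt {a b N : ℤ} {T S L : MvPolynomial (Fin 2) K} (h : Lead a b N S L)
    (h' : T - S ∈ SS K a b (Set.Iio N)) : Lead a b N T L := by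
  refine ⟨h.1, ?_⟩
  have := add_mem h' h.2
  rwa [show T - S + (S - L) = T - L by ring] at this

theorem X0pow_hom (w : ℤ) (u : ℕ) :
    (X 0 ^ u : MvPolynomial (Fin 2) K) ∈ SS K 1 w {(u : ℤ)} := by
  simpa using SS_eq_pow (SS_X0 (K := K) (a := 1) (b := w) (s := {1}) (by simp)) u

theorem base_hom (c : K) (v : ℕ) :
    (X 1 - C c * X 0 ^ v : MvPolynomial (Fin 2) K) ∈ SS K 1 v {(v : ℤ)} :=
  sub_mem (SS_X1 (by simp)) (SS_C_mul _ (X0pow_hom v v))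

theorem leadstd {v k : ℕ} (hv : 2 ≤ v) {c e : K} {T : MvPolynomial (Fin 2) K}
    (h : Lead 1 v ((v * k : ℕ) : ℤ) T (C e * (X 1 - C c * X 0 ^ v) ^ k)) :
    Lead 1 1 ((v * k : ℕ) : ℤ) T (C (e * (-c) ^ k) * X 0 ^ (v * k)) := by
  refine Lead.trans_lt ?_ (SS_std_lt (by omega) h.2)
  have h1 : Lead 1 1 (v : ℤ) (X 1 - C c * X 0 ^ v : MvPolynomial (Fin 2) K)
      (0 - C c * X 0 ^ v) := by
    refine Lead.sub (Lead.of_lt (SS_X1 ?_)) (Lead.of_hom (SS_C_mul _ (X0pow_hom 1 v)))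
    simp only [Set.mem_Iio]; exact_mod_cast (by omega : 1 < v)
  have h2 := (h1.pow k).C_mul e
  convert h2 using 1
  · push_cast; ring
  · rw [show (0 : MvPolynomial (Fin 2) K) - C c * X 0 ^ v = C (-c) * X 0 ^ v by simp]
    rw [mul_pow, ← pow_mul]; simp only [C_mul, C_pow]; ring

theorem eps_lead {v k : ℕ} {c e : K} {T : MvPolynomial (Fin 2) K}
    (h : Lead 1 v ((v * k : ℕ) : ℤ) T (C e * (X 1 - C c * X 0 ^ v) ^ k)) :
    Lead 1 v ((v * k : ℕ) : ℤ) (eps c v T) (C e * X 1 ^ k) := by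
  have h1 := h.comp (a' := 1) (b' := v) (P := X 0) (p := X 0) (Q := X 1 + C c * X 0 ^ v)
    (q := X 1 + C c * X 0 ^ v) (Lead.of_hom (SS_X0 (by simp)))
    (Lead.of_hom (add_mem (SS_X1 (by simp)) (SS_C_mul _ (X0pow_hom v v))))
  rw [← eps_apply] at h1
  convert h1 using 1
  simp [MvPolynomial.algebraMap_eq]

theorem eps_std_lt {v k : ℕ} (hv : 2 ≤ v) (hk : 0 < k) {c e : K} {T : MvPolynomial (Fin 2) K}
    (h : Lead 1 v ((v * k : ℕ) : ℤ) T (C e * (X 1 - C c * X 0 ^ v) ^ k)) :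
    eps c v T ∈ SS K 1 1 (Set.Iio ((v * k : ℕ) : ℤ)) := by
  have h1 := eps_lead h
  have h2 := SS_std_lt (by omega) h1.2
  have h3 : C e * X 1 ^ k ∈ SS K 1 1 (Set.Iio ((v * k : ℕ) : ℤ)) := by
    refine SS_C_mul _ (SS_mono ?_ (SS_Iic_pow (N := 1) (SS_X1 (by simp)) k))
    intro x hx
    simp only [Set.mem_Iic, Set.mem_Iio, mul_one] at *
    have : (k : ℤ) < ((v * k : ℕ) : ℤ) := by exact_mod_cast (by nlinarith : k < v * k)
    linarith
  simpa using add_mem h2 h3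

variable {ζ : K} {F : MvPolynomial (Fin 2) K ≃ₐ[K] MvPolynomial (Fin 2) K}

/-- induction hypothesis -/
def IHyp (ζ : K) (D : ℕ) : Prop :=
  ∀ F : MvPolynomial (Fin 2) K ≃ₐ[K] MvPolynomial (Fin 2) K, Com ζ F → FinOrd F →
    (∀ i, F (X i) ∈ SS K 1 1 (Set.Iio (D : ℤ))) → Lin ζ F

theorem IHe {D : ℕ} (IH : IHyp ζ D) (hF : Com ζ F) (hfin : FinOrd F) {v : ℕ} (hv : ζ ^ v = ζ)
    (c : K) (h0 : eps c v (F (X 0)) ∈ SS K 1 1 (Set.Iio (D : ℤ)))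
    (h1 : eps c v (F (X 1) - C c * F (X 0) ^ v) ∈ SS K 1 1 (Set.Iio (D : ℤ))) : Lin ζ F := by
  have hc := Com_eps (ζ := ζ) c hv
  refine Lin_conj hc (IH _ ((hc.mul hF).mul hc.inv) hfin.conj ?_)
  intro i
  fin_cases i
  · change eps c v (F ((eps c v).symm (X 0))) ∈ _
    rw [eps_symm_X0]; exact h0
  · change eps c v (F ((eps c v).symm (X 1))) ∈ _
    rw [eps_symm_X1, map_sub, map_mul, aut_C, map_pow]; exact h1

theorem classify [CharZero K] (hζ : ζ ≠ 1) (hF : Com ζ F) {a b : ℕ} (ha : 0 < a) (hab : a < b)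
    {p q : MvPolynomial (Fin 2) K}
    (hp : Lead 1 1 a (F.symm (X 0)) p) (hq : Lead 1 1 b (F.symm (X 1)) q)
    (hp0 : p ≠ 0) (hq0 : q ≠ 0) (i : Fin 2) :
    (∃ α : K, α ≠ 0 ∧ F (X i) = C α * X 0) ∨
    ∃ (v k : ℕ) (c e : K), 2 ≤ v ∧ b = v * a ∧ c ≠ 0 ∧ e ≠ 0 ∧ 0 < k ∧ q = C c * p ^ v ∧
      Lead 1 v ((v * k : ℕ) : ℤ) (F (X i)) (C e * (X 1 - C c * X 0 ^ v) ^ k) := by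
  obtain ⟨N, T₀, hT0, hT, -⟩ := exists_lead (a : ℤ) (b : ℤ) (aut_X_ne F i)
  rcases le_or_gt N 1 with hN | hN
  · left
    have h1 : ∀ m, coeff m (F (X i)) ≠ 0 → a * m 0 + b * m 1 ≤ 1 := by
      intro m hm
      have := hT.le m hm
      simp only [wt, Set.mem_Iic] at this
      exact_mod_cast this.trans hN
    have h2 : F (X i) ∈ SS K 1 1 (Set.Iic 1) := by
      intro m hm
      have := h1 m hm
      simp only [wt, Set.mem_Iic, one_mul]
      exact_mod_cast (by nlinarith : m 0 + m 1 ≤ 1)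
    have h3 := linear_form h2 (hF.coeff_zero hζ i)
    have h4 : coeff (Finsupp.single 1 1) (F (X i)) = 0 := by
      by_contra hne
      have := h1 _ hne
      simp at this
      omega
    rw [h4] at h3
    simp only [map_zero, zero_mul, add_zero] at h3
    refine ⟨_, ?_, h3⟩
    intro h5
    rw [h5] at h3
    exact aut_X_ne F i (by simpa using h3)
  · right
    obtain ⟨a', b', c, e, k, h1, h2, h3, h4, h5, h6, h7, h8, h9⟩ :=
      lemmaN F i ha (by omega) hp hq hp0 hq0 hT hT0 hN
    have h10 : a' < b' := by
      by_contra h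
      push Not at h
      nlinarith
    have h11 : a' = 1 := by omega
    subst h11
    have hb : b = b' * a := by rw [mul_comm, h3]; ring
    simp only [pow_one] at h8 h9
    refine ⟨b', k, c, e, by omega, hb, h5, h6, h7, h9, ?_⟩
    have hN' : N = a * ((b' * k : ℕ) : ℤ) := by
      have : C e * (X 1 - C c * X 0 ^ b') ^ k ∈ SS K a b {(a * ((b' * k : ℕ) : ℤ))} := by
        have h := SS_C_mul e (SS_eq_pow (base_hom c b') k)
        refine SS_weights ?_ h
        intro x y hxy
        simp only [Set.mem_singleton_iff] at *
        rw [hb]; push_cast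
        linear_combination (a : ℤ) * hxy
      rw [h8] at hT hT0
      exact (Lead.of_hom hT.1).weight_unique hT0 (Lead.of_hom this) hT0
    rw [← h8]
    constructor
    · rw [h8]
      have h := SS_C_mul e (SS_eq_pow (base_hom c b') k)
      convert h using 2
      push_cast; ring
    · refine SS_weights ?_ hT.2
      intro x y hxy
      simp only [Set.mem_Iio, hN'] at *
      rw [hb] at hxy
      have ha' : (0 : ℤ) < a := by exact_mod_cast ha
      refine lt_of_mul_lt_mul_left ?_ ha'.le
      push_cast at *
      linarith

end Step

end Ver

namespace Ver

section Step1

variable {K : Type*} [Field K] {ζ : K}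
  {F : MvPolynomial (Fin 2) K ≃ₐ[K] MvPolynomial (Fin 2) K}

theorem unip [CharZero K] {v : ℕ} {α e c : K} (he : e ≠ 0) (hc : c ≠ 0) (hα : e = α ^ v)
    (hv : 2 ≤ v)
    (h0 : F (X 0) = C α * X 0)
    (h1 : Lead 1 v (v : ℤ) (F (X 1)) (C e * (X 1 - C c * X 0 ^ v))) : ¬ FinOrd F := by
  rintro ⟨M, hM, hFM⟩
  have key : ∀ j : ℕ, (F ^ j) (X 1) - (C (e ^ j) * X 1 - C (j * e ^ j * c) * X 0 ^ v) ∈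
      SS K 1 v (Set.Iio (v : ℤ)) := by
    intro j
    induction j with
    | zero => simp
    | succ j ih =>
      have h2 := SS_comp_lt (P := F (X 0)) (Q := F (X 1)) (a' := 1) (b' := v)
        (by rw [h0]; exact SS_C_mul _ (X0_le _)) h1.le ih
      rw [← alg_eq_aeval] at h2
      have h3 := add_mem h2 (SS_C_mul (e ^ j) h1.2)
      rw [show (F ^ (j + 1)) (X 1) = F ((F ^ j) (X 1)) by
        rw [pow_succ' F j, AlgEquiv.mul_apply]]
      convert h3 using 1
      simp only [map_sub, map_mul, aut_C, map_pow, h0]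
      rw [mul_pow, ← map_pow C α v, ← hα]
      push_cast
      simp only [map_mul, map_pow, map_add, map_natCast, map_one]
      ring
  have h2 := key M
  rw [hFM, AlgEquiv.one_apply] at h2
  have h3 : coeff (Finsupp.single 0 v)
      (X 1 - (C (e ^ M) * X 1 - C (M * e ^ M * c) * X 0 ^ v) : MvPolynomial (Fin 2) K) = 0 := by
    by_contra hne
    have := h2 _ hne
    simp [wt] at this
  have hne : (Finsupp.single 1 1 : Fin 2 →₀ ℕ) ≠ Finsupp.single 0 v := by
    intro h
    have := DFunLike.congr_fun h 1
    simp at this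
  rw [coeff_sub, coeff_sub, coeff_C_mul, coeff_C_mul, coeff_X_pow, coeff_X] at h3
  simp [hne, he, hc] at h3
  omega

theorem zeta_of {a v : ℕ} (h1 : ζ ^ a = ζ) (h2 : ζ ^ (v * a) = ζ) : ζ ^ v = ζ := by
  rw [mul_comm, pow_mul, h1] at h2; exact h2

theorem lt_of_le_D {D N : ℤ} (h : N ≤ D) {p : MvPolynomial (Fin 2) K}
    (hp : p ∈ SS K 1 1 (Set.Iio N)) : p ∈ SS K 1 1 (Set.Iio D) :=
  SS_mono (fun x hx => by simp only [Set.mem_Iio] at *; omega) hp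

theorem le_of_lt_D {D N : ℤ} (h : N < D) {p : MvPolynomial (Fin 2) K}
    (hp : p ∈ SS K 1 1 (Set.Iic N)) : p ∈ SS K 1 1 (Set.Iio D) :=
  SS_mono (fun x hx => by simp only [Set.mem_Iio, Set.mem_Iic] at *; omega) hp

/-- both images of the second type, the second one of larger degree -/
theorem case_two [CharZero K] (hζ : ζ ≠ 1) {D : ℕ} (IH : IHyp ζ D) (hF : Com ζ F)
    (hfin : FinOrd F) {v l k : ℕ} {c e₁ e₂ : K} (hv : 2 ≤ v) (hζv : ζ ^ v = ζ) (hc : c ≠ 0)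
    (he₁ : e₁ ≠ 0) (he₂ : e₂ ≠ 0) (hl : 0 < l) (hlk : l < k) (hkD : v * k ≤ D)
    (hP : Lead 1 v ((v * l : ℕ) : ℤ) (F (X 0)) (C e₁ * (X 1 - C c * X 0 ^ v) ^ l))
    (hQ : Lead 1 v ((v * k : ℕ) : ℤ) (F (X 1)) (C e₂ * (X 1 - C c * X 0 ^ v) ^ k)) :
    Lin ζ F := by
  have hP' := leadstd hv hP
  have hQ' := leadstd hv hQ
  have n1 : C (e₁ * (-c) ^ l) * X 0 ^ (v * l) ≠ (0 : MvPolynomial (Fin 2) K) := by simp [he₁, hc]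
  have n2 : C (e₂ * (-c) ^ k) * X 0 ^ (v * k) ≠ (0 : MvPolynomial (Fin 2) K) := by simp [he₂, hc]
  have z1 := hF.lead_pow hP' n1
  have z2 := hF.lead_pow hQ' n2
  obtain ⟨N, T₀, hT0, hT, m, hm, hmN⟩ := exists_lead ((v * l : ℕ) : ℤ) ((v * k : ℕ) : ℤ)
    (aut_X_ne F.symm 1)
  have hlv : 2 ≤ v * l := by nlinarith
  have hkv : 2 ≤ v * k := by nlinarith
  have hN : 1 < N := by
    have hm0 : m 0 + m 1 ≠ 0 := by
      intro h
      have : m = 0 := fin2_ext (by simp; omega) (by simp; omega)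
      rw [this] at hm
      exact hm (hF.symm.coeff_zero hζ 1)
    rw [← hmN]
    simp only [wt]
    have : 1 < v * l * m 0 + v * k * m 1 := by
      rcases Nat.eq_zero_or_pos (m 0) with h | h
      · have : 1 ≤ m 1 := by omega
        nlinarith
      · nlinarith [Nat.zero_le (v * k * m 1)]
    exact_mod_cast this
  obtain ⟨a', w, -, -, -, h1, h2, h3, h4, -⟩ :=
    lemmaN F.symm 1 (a := v * l) (b := v * k) (by omega) (by omega)
      (by simpa using hP') (by simpa using hQ') n1 n2 hT hT0 hN
  have h5 : l * w = k * a' := by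
    have : v * (l * w) = v * (k * a') := by rw [← mul_assoc, h3, mul_assoc]
    exact Nat.eq_of_mul_eq_mul_left (by omega) this
  have h6 : a' < w := by
    by_contra h
    push Not at h
    nlinarith
  have h7 : a' = 1 := by omega
  subst h7
  rw [mul_one] at h5
  have zw : ζ ^ w = ζ := by
    refine zeta_of z1 ?_
    rw [show w * (v * l) = v * k by rw [← h5]; ring]; exact z2
  have hkD' : ((v * k : ℕ) : ℤ) ≤ D := by exact_mod_cast hkD
  have hlk' : ((v * l : ℕ) : ℤ) < ((v * k : ℕ) : ℤ) := by
    exact_mod_cast Nat.mul_lt_mul_of_pos_left hlk (by omega)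
  rcases le_or_gt w v with hwv | hwv
  · have hwv' : (w : ℤ) ≤ (v : ℤ) := by exact_mod_cast hwv
    refine IHe IH hF hfin zw (e₂ / e₁ ^ w) ?_ ?_
    · exact le_of_lt_D (by omega) (SS_std_le (by omega) (eps_le _ hwv' hP.le))
    · refine lt_of_le_D hkD' (SS_std_lt (v := v) (by omega) (eps_lt _ hwv' ?_))
      have h8 := (hP.pow w).C_mul (e₂ / e₁ ^ w)
      rw [show ((w : ℤ) * ((v * l : ℕ) : ℤ)) = ((v * k : ℕ) : ℤ) by
        rw [← h5]; push_cast; ring] at h8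
      have h9 := hQ.sub h8
      apply Lead.lt_of_zero
      convert h9 using 1
      rw [mul_pow, ← pow_mul, h5, ← mul_assoc, ← map_pow, ← C_mul, div_mul_cancel₀ _
        (pow_ne_zero _ he₁), sub_self]
  · refine IHe IH hF hfin hζv c ?_ ?_
    · exact lt_of_le_D (by omega) (eps_std_lt hv hl hP)
    · rw [map_sub, map_mul, aut_C, map_pow]
      refine sub_mem (lt_of_le_D hkD' (eps_std_lt hv (by omega) hQ)) (SS_C_mul _ ?_)
      have h8 := SS_Iic_pow (SS_mono Set.Iio_subset_Iic_self (eps_std_lt hv hl hP)) v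
      refine le_of_lt_D ?_ h8
      have : v * (v * l) < v * k := by
        rw [← h5]
        have : v * l < l * w := by nlinarith
        nlinarith
      have : (v : ℤ) * ((v * l : ℕ) : ℤ) < ((v * k : ℕ) : ℤ) := by exact_mod_cast this
      omega

/-- first image proportional to `x` -/
theorem case_one [CharZero K] {D : ℕ} (IH : IHyp ζ D) (hF : Com ζ F)
    (hfin : FinOrd F) {v k : ℕ} {c e α : K} (hv : 2 ≤ v) (hζv : ζ ^ v = ζ) (hc : c ≠ 0)
    (he : e ≠ 0) (hk : 0 < k) (hkD : v * k ≤ D)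
    (hP : F (X 0) = C α * X 0)
    (hQ : Lead 1 v ((v * k : ℕ) : ℤ) (F (X 1)) (C e * (X 1 - C c * X 0 ^ v) ^ k)) :
    Lin ζ F := by
  have hkD' : ((v * k : ℕ) : ℤ) ≤ D := by exact_mod_cast hkD
  have hkv : 2 ≤ v * k := by nlinarith
  have hX : ∀ s : K, eps s v (F (X 0)) ∈ SS K 1 1 (Set.Iio (D : ℤ)) := by
    intro s
    rw [hP, map_mul, aut_C, eps_X0]
    exact SS_C_mul _ (le_of_lt_D (by omega) (X0_le 1))
  rcases Nat.lt_or_ge 1 k with hk1 | hk1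
  · refine IHe IH hF hfin hζv c (hX c) ?_
    rw [map_sub, map_mul, aut_C, map_pow]
    refine sub_mem (lt_of_le_D hkD' (eps_std_lt hv (by omega) hQ)) (SS_C_mul _ ?_)
    rw [hP, map_mul, aut_C, eps_X0, mul_pow, ← map_pow]
    refine SS_C_mul _ (le_of_lt_D (N := v) ?_ (X0pow_le 1 v le_rfl))
    have : v < v * k := by nlinarith
    omega
  · have hk' : k = 1 := by omega
    subst hk'
    simp only [mul_one, pow_one] at hQ hkD hkD'
    by_cases hα : e = α ^ v
    · exact absurd hfin (unip he hc hα hv hP hQ)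
    · have hα' : e - α ^ v ≠ 0 := sub_ne_zero.2 hα
      set s := e * c / (e - α ^ v) with hs
      refine IHe IH hF hfin hζv s (hX s) ?_
      have h1 := eps_lt s le_rfl hQ.2
      have h2 : eps s v (F (X 1) - C s * F (X 0) ^ v) = C e * X 1 +
          eps s v (F (X 1) - C e * (X 1 - C c * X 0 ^ v)) := by
        rw [hP]
        simp only [map_sub, map_mul, map_pow, aut_C, eps_X0, eps_X1]
        have h3 : e * s - α ^ v * s - e * c = 0 := by
          rw [hs]; field_simp; ring
        have h4 : C (e * s - α ^ v * s - e * c) = (0 : MvPolynomial (Fin 2) K) := by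
          rw [h3, C_0]
        simp only [map_sub, map_mul, map_pow] at h4
        rw [mul_pow]
        linear_combination (X 0 ^ v) * h4
      rw [h2]
      refine add_mem (SS_C_mul _ (SS_X1 ?_)) (lt_of_le_D (N := v) hkD' (SS_std_lt (by omega) h1))
      simp only [Set.mem_Iio]; omega

theorem step1 [CharZero K] (hζ : ζ ≠ 1) {D : ℕ} (IH : IHyp ζ D) (hF : Com ζ F)
    (hfin : FinOrd F) (hle : ∀ i, F (X i) ∈ SS K 1 1 (Set.Iic (D : ℤ)))
    {a b : ℕ} (ha : 0 < a) (hab : a < b) {p q : MvPolynomial (Fin 2) K}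
    (hp : Lead 1 1 a (F.symm (X 0)) p) (hq : Lead 1 1 b (F.symm (X 1)) q)
    (hp0 : p ≠ 0) (hq0 : q ≠ 0) : Lin ζ F := by
  have za := hF.symm.lead_pow hp hp0
  have zb := hF.symm.lead_pow hq hq0
  rcases classify hζ hF ha hab hp hq hp0 hq0 0 with ⟨α, hα, h0⟩ |
    ⟨v, l, c, e₁, hv, hb, hc, he₁, hl, hqp, h0⟩ <;>
  rcases classify hζ hF ha hab hp hq hp0 hq0 1 with ⟨β, hβ, h1⟩ |
    ⟨w, k, c', e₂, hw, hb', hc', he₂, hk, hqp', h1⟩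
  · exfalso
    have h2 : C β * X 0 - C α * X 1 = (0 : MvPolynomial (Fin 2) K) := by
      apply F.injective
      rw [map_sub, map_mul, map_mul, aut_C, aut_C, h0, h1, map_zero]; ring
    have h3 := congrArg (MvPolynomial.eval ![1, 0]) h2
    simp at h3
    exact hβ h3
  · rw [hb'] at zb
    have h2 : ((w * k : ℕ) : ℤ) ≤ D :=
      (leadstd hw h1).le_of_mem (by simp [he₂, hc']) (hle 1)
    exact case_one IH hF hfin hw (zeta_of za zb) hc' he₂ hk (by exact_mod_cast h2) h0 h1
  · exfalso
    refine inf_order (d := v * l) (by nlinarith) ?_ (leadstd hv h0) ?_ hfin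
    · exact mul_ne_zero he₁ (pow_ne_zero _ (neg_ne_zero.2 hc))
    · rw [h1]
      refine SS_C_mul _ (SS_X0 ?_)
      simp only [Set.mem_Iic]
      have : 1 ≤ v * l := by nlinarith
      exact_mod_cast this
  · have hvw : v = w := Nat.eq_of_mul_eq_mul_right ha (by rw [← hb, ← hb'])
    subst hvw
    have hcc : c = c' := by
      have h2 := hqp.symm.trans hqp'
      exact C_injective _ _ (mul_right_cancel₀ (pow_ne_zero _ hp0) h2)
    subst hcc
    rw [hb] at zb
    rcases Nat.lt_or_ge l k with hlk | hlk
    · have h2 : ((v * k : ℕ) : ℤ) ≤ D :=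
        (leadstd hv h1).le_of_mem (by simp [he₂, hc]) (hle 1)
      exact case_two hζ IH hF hfin hv (zeta_of za zb) hc he₁ he₂ hl hlk (by exact_mod_cast h2) h0 h1
    · exfalso
      refine inf_order (d := v * l) (by nlinarith) ?_ (leadstd hv h0) ?_ hfin
      · exact mul_ne_zero he₁ (pow_ne_zero _ (neg_ne_zero.2 hc))
      · refine SS_mono ?_ (leadstd hv h1).le
        intro x hx
        simp only [Set.mem_Iic] at *
        have : v * k ≤ v * l := Nat.mul_le_mul_left v hlk
        have : ((v * k : ℕ) : ℤ) ≤ ((v * l : ℕ) : ℤ) := by exact_mod_cast this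
        omega

end Step1

end Ver

namespace Ver

section Main

variable {K : Type*} [Field K] {ζ : K}
  {F : MvPolynomial (Fin 2) K ≃ₐ[K] MvPolynomial (Fin 2) K}

theorem Com.exists_lead (hζ : ζ ≠ 1) (hF : Com ζ F) (i : Fin 2) :
    ∃ (a : ℕ) (p : MvPolynomial (Fin 2) K), 0 < a ∧ p ≠ 0 ∧ Lead 1 1 a (F (X i)) p := by
  obtain ⟨N, p, hp, h, m, hm, hmN⟩ := Ver.exists_lead 1 1 (aut_X_ne F i)
  have hm0 : m 0 + m 1 ≠ 0 := by
    intro h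
    have : m = 0 := fin2_ext (by simp; omega) (by simp; omega)
    rw [this] at hm
    exact hm (hF.coeff_zero hζ i)
  have hN : N = ((m 0 + m 1 : ℕ) : ℤ) := by rw [← hmN]; simp [wt]
  exact ⟨m 0 + m 1, p, by omega, hp, hN ▸ h⟩

theorem step_ne [CharZero K] (hζ : ζ ≠ 1) {D : ℕ} (IH : IHyp ζ D) (hF : Com ζ F)
    (hfin : FinOrd F) (hle : ∀ i, F (X i) ∈ SS K 1 1 (Set.Iic (D : ℤ)))
    {a b : ℕ} (ha : 0 < a) (hb : 0 < b) (hab : a ≠ b) {p q : MvPolynomial (Fin 2) K}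
    (hp : Lead 1 1 a (F.symm (X 0)) p) (hq : Lead 1 1 b (F.symm (X 1)) q)
    (hp0 : p ≠ 0) (hq0 : q ≠ 0) : Lin ζ F := by
  rcases lt_or_gt_of_ne hab with h | h
  · exact step1 hζ IH hF hfin hle ha h hp hq hp0 hq0
  have key : ∀ {N : ℤ} {T T₀ : MvPolynomial (Fin 2) K}, Lead 1 1 N T T₀ →
      Lead 1 1 N (swp T) (swp T₀) := by
    intro N T T₀ h
    rw [swp_apply, swp_apply]
    exact h.comp (Lead.of_hom (SS_X1 (by simp))) (Lead.of_hom (SS_X0 (by simp)))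
  have keyle : ∀ {N : ℤ} {T : MvPolynomial (Fin 2) K}, T ∈ SS K 1 1 (Set.Iic N) →
      swp T ∈ SS K 1 1 (Set.Iic N) := by
    intro N T h
    rw [swp_apply]
    exact SS_comp_le (SS_X1 (by simp)) (SS_X0 (by simp)) h
  have hs : Com ζ (swp : MvPolynomial (Fin 2) K ≃ₐ[K] _) := Com_swp
  refine Lin_conj hs ?_
  have hne : ∀ {r : MvPolynomial (Fin 2) K}, r ≠ 0 → swp r ≠ 0 := by
    intro r hr
    rwa [Ne, EmbeddingLike.map_eq_zero_iff]
  refine step1 hζ IH ((hs.mul hF).mul hs.inv) hfin.conj ?_ hb h (p := swp q) (q := swp p)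
    ?_ ?_ (hne hq0) (hne hp0)
  · intro i
    fin_cases i
    · change swp (F (swp.symm (X 0))) ∈ _
      rw [swp_symm_X0]; exact keyle (hle 1)
    · change swp (F (swp.symm (X 1))) ∈ _
      rw [swp_symm_X1]; exact keyle (hle 0)
  · change Lead _ _ _ (swp (F.symm (swp.symm (X 0)))) _
    rw [swp_symm_X0]; exact key hq
  · change Lead _ _ _ (swp (F.symm (swp.symm (X 1)))) _
    rw [swp_symm_X1]; exact key hp

theorem step0 [CharZero K] (hζ : ζ ≠ 1) {D : ℕ} (hD : 2 ≤ D) (IH : IHyp ζ D) (hF : Com ζ F)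
    (hfin : FinOrd F) (hle : ∀ i, F (X i) ∈ SS K 1 1 (Set.Iic (D : ℤ))) : Lin ζ F := by
  by_cases hlt : ∀ i, F (X i) ∈ SS K 1 1 (Set.Iio (D : ℤ))
  · exact IH F hF hfin hlt
  push Not at hlt
  obtain ⟨i, hi⟩ := hlt
  obtain ⟨a, p, ha, hp0, hp⟩ := hF.symm.exists_lead hζ 0
  obtain ⟨b, q, hb, hq0, hq⟩ := hF.symm.exists_lead hζ 1
  by_cases hab : a = b
  swap
  · exact step_ne hζ IH hF hfin hle ha hb hab hp hq hp0 hq0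
  subst hab
  obtain ⟨N, T₀, hT0, hT, -⟩ := Ver.exists_lead (a : ℤ) (a : ℤ) (aut_X_ne F i)
  have hN : 1 < N := by
    by_contra hN
    push Not at hN
    apply hi
    intro m hm
    have h1 := hT.le m hm
    simp only [wt, Set.mem_Iic, Set.mem_Iio, one_mul] at *
    have h2 : (1 : ℤ) ≤ a := by exact_mod_cast ha
    have h3 : (2 : ℤ) ≤ D := by exact_mod_cast hD
    nlinarith [Int.natCast_nonneg (m 0), Int.natCast_nonneg (m 1)]
  obtain ⟨a', b', c, e, k, h1, h2, h3, h4, h5, h6, h7, h8, h9⟩ :=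
    lemmaN F i ha ha hp hq hp0 hq0 hT hT0 hN
  have h10 : b' = a' := Nat.eq_of_mul_eq_mul_left ha h3
  have h11 : a' = 1 := by omega
  subst h11; subst h10
  rw [pow_one, pow_one] at h9
  have hs := Com_eps (ζ := ζ) (v := 1) c (pow_one ζ)
  refine Lin_conj hs ?_
  have hcom := (hs.mul hF).mul hs.inv
  obtain ⟨b, q', hb, hq0', hq'⟩ := hcom.symm.exists_lead hζ 1
  have hlt : (eps c 1 * F * (eps c 1)⁻¹).symm (X 1) ∈ SS K 1 1 (Set.Iio (a : ℤ)) := by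
    change eps c 1 (F.symm ((eps c 1).symm (X 1))) ∈ _
    rw [eps_symm_X1, map_sub, map_mul, aut_C, map_pow, pow_one]
    refine eps_lt c (by simp) ?_
    apply Lead.lt_of_zero
    convert hq.sub (hp.C_mul c) using 1
    rw [h9, sub_self]
  have hba : b < a := by
    have h12 : F.symm (X 1) = F.symm (X 1) := rfl
    have := hq'.le_of_mem (M := (a : ℤ) - 1) hq0'
      (SS_mono (fun x hx => by simp only [Set.mem_Iio, Set.mem_Iic] at *; omega) hlt)
    omega
  refine step_ne hζ IH hcom hfin.conj ?_ ha hb (by omega) (p := eps c 1 p) ?_ hq' ?_ hq0'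
  · intro i
    fin_cases i
    · change eps c 1 (F ((eps c 1).symm (X 0))) ∈ _
      rw [eps_symm_X0]; exact eps_le c (by simp) (hle 0)
    · change eps c 1 (F ((eps c 1).symm (X 1))) ∈ _
      rw [eps_symm_X1, map_sub, map_mul, aut_C, map_pow, pow_one]
      exact eps_le c (by simp) (sub_mem (hle 1) (SS_C_mul _ (hle 0)))
  · change Lead _ _ _ (eps c 1 (F.symm ((eps c 1).symm (X 0)))) _
    rw [eps_symm_X0, eps_apply, eps_apply]
    refine hp.comp (Lead.of_hom (SS_X0 (by simp))) (Lead.of_hom ?_)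
    rw [pow_one]
    exact add_mem (SS_X1 (by simp)) (SS_C_mul _ (SS_X0 (by simp)))
  · rwa [Ne, EmbeddingLike.map_eq_zero_iff]

theorem main_lin [CharZero K] (hζ : ζ ≠ 1) (D : ℕ) :
    ∀ F : MvPolynomial (Fin 2) K ≃ₐ[K] MvPolynomial (Fin 2) K, Com ζ F → FinOrd F →
    (∀ i, F (X i) ∈ SS K 1 1 (Set.Iic (D : ℤ))) → Lin ζ F := by
  induction D with
  | zero =>
    intro F hF _ h
    refine ⟨1, fun p => rfl, ?_⟩
    simp only [inv_one, one_mul, mul_one]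
    exact linear_case hζ hF fun i => SS_mono
      (fun x hx => by simp only [Set.mem_Iic] at *; omega) (h i)
  | succ D ih =>
    intro F hF hfin h
    rcases Nat.eq_zero_or_pos D with hD | hD
    · subst hD
      refine ⟨1, fun p => rfl, ?_⟩
      simp only [inv_one, one_mul, mul_one]
      exact linear_case hζ hF fun i => SS_mono
        (fun x hx => by simp only [Set.mem_Iic] at *; omega) (h i)
    · refine step0 hζ (D := D + 1) (by omega) ?_ hF hfin h
      intro F' h1 h2 h3
      exact ih F' h1 h2 fun i => SS_mono
        (fun x hx => by simp only [Set.mem_Iic, Set.mem_Iio] at *; omega) (h3 i)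

theorem exists_bound (p : MvPolynomial (Fin 2) K) :
    ∃ D : ℕ, p ∈ SS K 1 1 (Set.Iic (D : ℤ)) := by
  by_cases hp : p = 0
  · exact ⟨0, by rw [hp]; exact zero_mem _⟩
  · obtain ⟨N, p₀, -, h, -⟩ := Ver.exists_lead 1 1 hp
    exact ⟨N.toNat, SS_mono (fun x hx => by simp only [Set.mem_Iic] at *; omega) h.le⟩

theorem main_lin' [CharZero K] (hζ : ζ ≠ 1) (hF : Com ζ F) (hfin : FinOrd F) : Lin ζ F := by
  obtain ⟨D₀, h0⟩ := exists_bound (F (X 0))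
  obtain ⟨D₁, h1⟩ := exists_bound (F (X 1))
  refine main_lin hζ (max D₀ D₁) F hF hfin ?_
  intro i
  fin_cases i
  · exact SS_mono (fun x hx => by simp only [Set.mem_Iic] at *; omega) h0
  · exact SS_mono (fun x hx => by simp only [Set.mem_Iic] at *; omega) h1

end Main

end Ver

namespace Ver

section Veronese

variable {K : Type*} [Field K]

theorem gen_mem {n i : ℕ} (hi : i ≤ n) : (X 0 ^ (n - i) * X 1 ^ i : MvPolynomial (Fin 2) K) ∈
    veronese K n := Algebra.subset_adjoin ⟨i, hi, rfl⟩

theorem mono_mem {n : ℕ} (k : ℕ) : ∀ i j : ℕ, i + j = n * k →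
    (X 0 ^ i * X 1 ^ j : MvPolynomial (Fin 2) K) ∈ veronese K n := by
  induction k with
  | zero =>
    intro i j h
    have h1 : i = 0 := by omega
    have h2 : j = 0 := by omega
    subst h1; subst h2
    simpa using one_mem _
  | succ k ih =>
    intro i j h
    rw [mul_add, mul_one] at h
    rcases Nat.lt_or_ge i n with hi | hi
    · have h1 := ih 0 (j - (n - i)) (by omega)
      have h2 := gen_mem (K := K) (n := n) (i := n - i) (by omega)
      have h3 := mul_mem h2 h1
      convert h3 using 1
      rw [show n - (n - i) = i by omega, pow_zero, one_mul, mul_assoc, ← pow_add]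
      congr 2; omega
    · have h1 := ih (i - n) j (by omega)
      have h2 := gen_mem (K := K) (n := n) (i := 0) (by omega)
      have h3 := mul_mem h2 h1
      convert h3 using 1
      rw [pow_zero, mul_one, ← mul_assoc, ← pow_add]
      congr 2; omega

theorem mem_ver_iff {n : ℕ} {ζ : K} (hζ : IsPrimitiveRoot ζ n) (p : MvPolynomial (Fin 2) K) :
    p ∈ veronese K n ↔ sc ζ p = p := by
  constructor
  · intro hp
    have : veronese K n ≤ AlgHom.equalizer (sc ζ) (AlgHom.id K _) := by
      refine Algebra.adjoin_le ?_
      rintro _ ⟨i, hi, rfl⟩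
      change sc ζ (X 0 ^ (n - i) * X 1 ^ i) = X 0 ^ (n - i) * X 1 ^ i
      rw [map_mul, map_pow, map_pow, sc_X, sc_X]
      have h1 : (C ζ : MvPolynomial (Fin 2) K) ^ (n - i) * C ζ ^ i = 1 := by
        rw [← pow_add, Nat.sub_add_cancel hi, ← map_pow, hζ.pow_eq_one, C_1]
      linear_combination (X 0 ^ (n - i) * X 1 ^ i) * h1
    exact this hp
  · intro h
    rw [p.as_sum]
    refine sum_mem fun m hm => ?_
    have h1 := congrArg (coeff m) h
    rw [coeff_sc] at h1
    have hm' : coeff m p ≠ 0 := by simpa using hm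
    have h2 : ζ ^ (m 0 + m 1) = 1 := mul_right_cancel₀ hm' (by rw [h1, one_mul])
    obtain ⟨k, hk⟩ := hζ.dvd_of_pow_eq_one _ h2
    rw [monomial2, C_mul']
    exact Subalgebra.smul_mem _ (mono_mem k _ _ hk) _

theorem const_of_dvd {n : ℕ} (hn : 1 ≤ n) {h : MvPolynomial (Fin 2) K} {a b : K}
    (h0 : h ∣ X 0 ^ n - C a) (h1 : h ∣ X 1 ^ n - C b) : ∃ c, c ≠ 0 ∧ h = C c := by
  have key : ∀ i j : Fin 2, j ≠ i → ∀ a : K, h ∣ X i ^ n - C a →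
      degreeOf j h = 0 ∧ h ≠ 0 := by
    intro i j hij a hd
    obtain ⟨g, hg⟩ := hd
    have hne : (X i ^ n - C a : MvPolynomial (Fin 2) K) ≠ 0 := by
      classical
      intro h
      have := congrArg (coeff (Finsupp.single i n)) h
      rw [coeff_sub, coeff_X_pow, coeff_C] at this
      have h3 : (0 : Fin 2 →₀ ℕ) ≠ Finsupp.single i n := by
        intro h
        have := DFunLike.congr_fun h i
        simp at this
        omega
      simp [h3] at this
    have hh : h ≠ 0 := by rintro rfl; simp at hg; exact hne hg
    have hg0 : g ≠ 0 := by rintro rfl; simp at hg; exact hne hg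
    refine ⟨?_, hh⟩
    have h4 : degreeOf j (X i ^ n - C a : MvPolynomial (Fin 2) K) = 0 := by
      have h5 := degreeOf_sub_le j (X i ^ n : MvPolynomial (Fin 2) K) (C a)
      have h6 : degreeOf j (X i ^ n : MvPolynomial (Fin 2) K) = 0 := by
        have h7 := degreeOf_pow_le j (X i : MvPolynomial (Fin 2) K) n
        rw [degreeOf_X] at h7
        simp [hij] at h7
        exact h7
      rw [h6, degreeOf_C] at h5
      simpa using h5
    rw [hg, degreeOf_mul_eq hh hg0] at h4
    omega
  have k1 := key 0 1 (by decide) a h0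
  have k0 := key 1 0 (by decide) b h1
  have hC : h = C (coeff 0 h) := by
    classical
    ext m
    rw [coeff_C]
    split_ifs with hm
    · rw [hm]
    · by_contra hne
      apply hm
      have hs : m ∈ h.support := by simpa using hne
      have h3 := monomial_le_degreeOf 0 hs
      have h4 := monomial_le_degreeOf 1 hs
      exact fin2_ext (by simp; omega) (by simp; omega)
  refine ⟨_, ?_, hC⟩
  intro h5
  rw [h5] at hC
  exact k1.2 (by rw [hC]; simp)

/-- an automorphism of the Veronese subalgebra extends to an endomorphism of `K[x,y]` -/
theorem exists_lift [IsAlgClosed K] {n : ℕ} (hn : 2 ≤ n) (f : veronese K n ≃ₐ[K] veronese K n) :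
    ∃ G : MvPolynomial (Fin 2) K →ₐ[K] MvPolynomial (Fin 2) K,
      ∀ v : veronese K n, G v = f v := by
  set g : ℕ → veronese K n := fun i => if hi : i ≤ n then ⟨_, gen_mem (K := K) hi⟩ else 0 with hg
  have hgv : ∀ i, i ≤ n → (g i : MvPolynomial (Fin 2) K) = X 0 ^ (n - i) * X 1 ^ i := by
    intro i hi; simp [hg, hi]
  set A : ℕ → MvPolynomial (Fin 2) K := fun i => (f (g i) : MvPolynomial (Fin 2) K) with hA
  have hrel : ∀ i, i + 1 ≤ n → A (i + 1) * A 0 ^ i = A 1 ^ (i + 1) := by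
    intro i hi
    have : g (i + 1) * g 0 ^ i = g 1 ^ (i + 1) := by
      apply Subtype.ext
      push_cast
      rw [hgv _ hi, hgv _ (by omega), hgv _ (by omega)]
      obtain ⟨k, rfl⟩ : ∃ k, n = k + (i + 1) := ⟨n - (i + 1), by omega⟩
      rw [show k + (i + 1) - (i + 1) = k by omega, show k + (i + 1) - 0 = k + i + 1 by omega,
        show k + (i + 1) - 1 = k + i by omega]
      ring
    have h2 := congrArg (fun v => (f v : MvPolynomial (Fin 2) K)) this
    simpa using h2
  have hA0 : A 0 ≠ 0 := by
    intro h
    have h1 : f (g 0) = 0 := Subtype.ext h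
    rw [EmbeddingLike.map_eq_zero_iff] at h1
    have h2 := congrArg (fun v : veronese K n => (v : MvPolynomial (Fin 2) K)) h1
    change (g 0 : MvPolynomial (Fin 2) K) = 0 at h2
    rw [hgv 0 (by omega)] at h2
    simp at h2
  obtain ⟨P, Q, c, hPQ, hP, hQ⟩ :=
    UniqueFactorizationMonoid.exists_reduced_factors (A 0) hA0 (A 1)
  have hc0 : c ≠ 0 := by rintro rfl; rw [zero_mul] at hP; exact hA0 hP.symm
  have hP0 : P ≠ 0 := by rintro rfl; rw [mul_zero] at hP; exact hA0 hP.symm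
  have hrel2 : ∀ i, i + 1 ≤ n → A (i + 1) * P ^ i = c * Q ^ (i + 1) := by
    intro i hi
    have h1 := hrel i hi
    rw [← hP, ← hQ] at h1
    apply mul_right_cancel₀ (pow_ne_zero i hc0)
    linear_combination h1
  have hdvd : P ^ (n - 1) ∣ c := by
    have h1 := hrel2 (n - 1) (by omega)
    have h2 : P ^ (n - 1) ∣ c * Q ^ (n - 1 + 1) := ⟨A (n - 1 + 1), by rw [← h1]; ring⟩
    exact (hPQ.pow (m := n - 1) (n := n - 1 + 1)).dvd_of_dvd_mul_right h2
  obtain ⟨h, hh⟩ := hdvd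
  have hAi : ∀ i, i ≤ n → A i = h * (P ^ (n - i) * Q ^ i) := by
    intro i hi
    rcases i with _ | i
    · rw [← hP, hh]
      obtain ⟨k, rfl⟩ : ∃ k, n = k + 1 := ⟨n - 1, by omega⟩
      simp only [Nat.add_sub_cancel, Nat.sub_zero, pow_zero]; ring
    · apply mul_right_cancel₀ (pow_ne_zero i hP0)
      rw [hrel2 i hi, hh]
      obtain ⟨k, rfl⟩ : ∃ k, n = k + (i + 1) := ⟨n - (i + 1), by omega⟩
      rw [show k + (i + 1) - (i + 1) = k by omega, show k + (i + 1) - 1 = k + i by omega]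
      ring
  have hconst : ∀ (x : MvPolynomial (Fin 2) K) (hx : x ∈ veronese K n),
      h ∣ (f ⟨x, hx⟩ : MvPolynomial (Fin 2) K) - C (constantCoeff x) := by
    intro x hx
    induction hx using Algebra.adjoin_induction with
    | mem x hx =>
      obtain ⟨i, hi, rfl⟩ := hx
      have h1 : g i = ⟨X 0 ^ (n - i) * X 1 ^ i, gen_mem hi⟩ := Subtype.ext (hgv i hi)
      have h2 := hAi i hi
      simp only [hA, h1] at h2
      have h3 : constantCoeff (X 0 ^ (n - i) * X 1 ^ i : MvPolynomial (Fin 2) K) = 0 := by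
        simp only [map_mul, map_pow, constantCoeff_X]
        rw [← pow_add, Nat.sub_add_cancel hi]
        exact zero_pow (by omega)
      rw [h3, C_0, sub_zero]
      exact ⟨_, h2⟩
    | algebraMap r =>
      have h1 : f ⟨algebraMap K _ r, Subalgebra.algebraMap_mem _ r⟩ = algebraMap K _ r :=
        f.commutes r
      have h2 : (f ⟨algebraMap K _ r, Subalgebra.algebraMap_mem _ r⟩ : MvPolynomial (Fin 2) K) =
        C r := by rw [h1]; rfl
      rw [h2, MvPolynomial.algebraMap_eq, constantCoeff_C, sub_self]
      exact dvd_zero _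
    | add x y hx hy h1 h2 =>
      have h3 : f ⟨x + y, add_mem hx hy⟩ = f ⟨x, hx⟩ + f ⟨y, hy⟩ := by
        rw [← map_add]; rfl
      rw [h3, map_add, map_add]
      convert dvd_add h1 h2 using 1
      push_cast; ring
    | mul x y hx hy h1 h2 =>
      have h3 : f ⟨x * y, mul_mem hx hy⟩ = f ⟨x, hx⟩ * f ⟨y, hy⟩ := by
        rw [← map_mul]; rfl
      rw [h3, map_mul, map_mul]
      convert dvd_add (h1.mul_right (f ⟨y, hy⟩ : MvPolynomial (Fin 2) K))
        (h2.mul_left (C (constantCoeff x))) using 1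
      push_cast; ring
  obtain ⟨c0, hc0', hh0⟩ : ∃ c, c ≠ 0 ∧ h = C c := by
    have h1 := hconst (f.symm (g 0) : MvPolynomial (Fin 2) K) (f.symm (g 0)).2
    have h2 := hconst (f.symm (g n) : MvPolynomial (Fin 2) K) (f.symm (g n)).2
    simp only [Subtype.coe_eta, AlgEquiv.apply_symm_apply] at h1 h2
    rw [hgv 0 (by omega)] at h1
    rw [hgv n le_rfl] at h2
    simp only [Nat.sub_zero, Nat.sub_self, pow_zero, mul_one, one_mul] at h1 h2
    exact const_of_dvd (by omega) h1 h2
  obtain ⟨θ, hθ⟩ := IsAlgClosed.exists_pow_nat_eq c0 (by omega : 0 < n)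
  refine ⟨aeval ![C θ * P, C θ * Q], ?_⟩
  rintro ⟨x, hx⟩
  simp only
  induction hx using Algebra.adjoin_induction with
  | mem x hx =>
    obtain ⟨i, hi, rfl⟩ := hx
    have h1 : g i = ⟨X 0 ^ (n - i) * X 1 ^ i, gen_mem hi⟩ := Subtype.ext (hgv i hi)
    have h2 := hAi i hi
    simp only [hA, h1] at h2
    rw [h2, hh0, ← hθ]
    have h3 : (C θ : MvPolynomial (Fin 2) K) ^ n = C θ ^ (n - i) * C θ ^ i := by
      rw [← pow_add, Nat.sub_add_cancel hi]
    simp only [map_mul, map_pow, aeval_X, h3]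
    simp only [Matrix.cons_val_zero, Matrix.cons_val_one]
    ring
  | algebraMap r =>
    have h1 : f ⟨algebraMap K _ r, Subalgebra.algebraMap_mem _ r⟩ = algebraMap K _ r :=
      f.commutes r
    have h2 : (f ⟨algebraMap K _ r, Subalgebra.algebraMap_mem _ r⟩ : MvPolynomial (Fin 2) K) =
      C r := by rw [h1]; rfl
    rw [h2, MvPolynomial.algebraMap_eq, ← MvPolynomial.algebraMap_eq, AlgHom.commutes]
  | add x y hx hy h1 h2 =>
    have h3 : f ⟨x + y, add_mem hx hy⟩ = f ⟨x, hx⟩ + f ⟨y, hy⟩ := by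
      rw [← map_add]; rfl
    rw [h3, map_add, h1, h2]; push_cast; rfl
  | mul x y hx hy h1 h2 =>
    have h3 : f ⟨x * y, mul_mem hx hy⟩ = f ⟨x, hx⟩ * f ⟨y, hy⟩ := by
      rw [← map_mul]; rfl
    rw [h3, map_mul, h1, h2]; push_cast; rfl

end Veronese

end Ver

namespace Ver

section Final

variable {K : Type*} [Field K]

theorem pow_eq_unit {n : ℕ} (hn : 2 ≤ n) {i : Fin 2} {z : MvPolynomial (Fin 2) K}
    (h : z ^ n = X i ^ n) : ∃ ξ : K, ξ ^ n = 1 ∧ z = C ξ * X i := by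
  have h1 : z ∣ X i := (IsIntegrallyClosed.pow_dvd_pow_iff (by omega : n ≠ 0)).1 (by rw [h])
  have h2 : X i ∣ z := (IsIntegrallyClosed.pow_dvd_pow_iff (by omega : n ≠ 0)).1 (by rw [h])
  obtain ⟨u, hu⟩ := associated_of_dvd_dvd h2 h1
  obtain ⟨ξ, -, hξ⟩ := MvPolynomial.isUnit_iff_eq_C_of_isReduced.1 u.isUnit
  rw [hξ] at hu
  refine ⟨ξ, ?_, by rw [← hu]; ring⟩
  rw [← hu, mul_pow] at h
  have h3 : (C ξ : MvPolynomial (Fin 2) K) ^ n = 1 := by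
    apply mul_left_cancel₀ (pow_ne_zero n (X_ne_zero (R := K) i))
    rw [h, mul_one]
  rw [← map_pow, ← C_1] at h3
  exact C_injective _ _ h3

theorem fix_ver {n : ℕ} (hn : 2 ≤ n) (Φ : MvPolynomial (Fin 2) K →ₐ[K] MvPolynomial (Fin 2) K)
    (h : ∀ p ∈ veronese K n, Φ p = p) : ∃ ξ : K, ξ ^ n = 1 ∧ Φ = sc ξ := by
  have h0 := h _ (gen_mem (i := 0) (by omega))
  have h1 := h _ (gen_mem (i := 1) (by omega))
  have h2 := h _ (gen_mem (i := n) (by omega))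
  simp only [Nat.sub_zero, Nat.sub_self, pow_zero, mul_one, one_mul, pow_one, map_mul, map_pow]
    at h0 h1 h2
  obtain ⟨ξ, hξ, hx⟩ := pow_eq_unit hn h0
  obtain ⟨η, hη, hy⟩ := pow_eq_unit hn h2
  rw [hx, hy] at h1
  have h3 : C (ξ ^ (n - 1) * η) = (1 : MvPolynomial (Fin 2) K) := by
    apply mul_right_cancel₀ (mul_ne_zero (pow_ne_zero (n - 1) (X_ne_zero (R := K) (0 : Fin 2)))
      (X_ne_zero (R := K) (1 : Fin 2)))
    rw [one_mul, C_mul, C_pow]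
    linear_combination h1
  rw [← C_1] at h3
  have h4 := C_injective _ _ h3
  have h5 : ξ ^ (n - 1) * ξ = 1 := by
    rw [← pow_succ, Nat.sub_add_cancel (by omega), hξ]
  have h6 : ξ ^ (n - 1) ≠ 0 := left_ne_zero_of_mul_eq_one h5
  have h7 : ξ = η := mul_left_cancel₀ h6 (h5.trans h4.symm)
  subst h7
  refine ⟨ξ, hξ, ?_⟩
  apply MvPolynomial.algHom_ext
  intro i
  fin_cases i
  · simp [sc_X, hx]
  · simp [sc_X, hy]

theorem sc_sc (ξ η : K) (h : ξ * η = 1) (p : MvPolynomial (Fin 2) K) : sc ξ (sc η p) = p := by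
  ext m
  rw [coeff_sc, coeff_sc, ← mul_assoc, ← mul_pow, h, one_pow, one_mul]

/-- an automorphism of the Veronese subalgebra extends to an automorphism of `K[x,y]` -/
theorem exists_lift_equiv [IsAlgClosed K] {n : ℕ} (hn : 2 ≤ n)
    (f : veronese K n ≃ₐ[K] veronese K n) :
    ∃ F : MvPolynomial (Fin 2) K ≃ₐ[K] MvPolynomial (Fin 2) K,
      ∀ v : veronese K n, F v = f v := by
  obtain ⟨G, hG⟩ := exists_lift hn f
  obtain ⟨G', hG'⟩ := exists_lift hn f.symm
  obtain ⟨ξ, hξ, h1⟩ := fix_ver hn (G.comp G') (by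
    intro p hp
    have h1 := hG' ⟨p, hp⟩
    simp only at h1
    rw [AlgHom.comp_apply, h1, hG]; simp)
  obtain ⟨η, hη, h2⟩ := fix_ver hn (G'.comp G) (by
    intro p hp
    have h1 := hG ⟨p, hp⟩
    simp only at h1
    rw [AlgHom.comp_apply, h1, hG']; simp)
  have h1' : ∀ p, G (G' p) = sc ξ p := fun p => by rw [← h1]; rfl
  have h2' : ∀ p, G' (G p) = sc η p := fun p => by rw [← h2]; rfl
  have hξ0 : ξ ≠ 0 := by rintro rfl; rw [zero_pow (by omega)] at hξ; exact zero_ne_one hξ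
  have hη0 : η ≠ 0 := by rintro rfl; rw [zero_pow (by omega)] at hη; exact zero_ne_one hη
  have hbij : Function.Bijective G := by
    constructor
    · intro p q hpq
      have h3 := congrArg G' hpq
      rw [h2', h2'] at h3
      have h4 := congrArg (sc η⁻¹) h3
      rwa [sc_sc _ _ (inv_mul_cancel₀ hη0), sc_sc _ _ (inv_mul_cancel₀ hη0)] at h4
    · intro p
      exact ⟨G' (sc ξ⁻¹ p), by rw [h1', sc_sc _ _ (mul_inv_cancel₀ hξ0)]⟩
  exact ⟨AlgEquiv.ofBijective G hbij, hG⟩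

theorem aut_sc_pow {F : MvPolynomial (Fin 2) K ≃ₐ[K] MvPolynomial (Fin 2) K} {ξ : K}
    (h : ∀ p, F p = sc ξ p) (j : ℕ) (i : Fin 2) : (F ^ j) (X i) = C (ξ ^ j) * X i := by
  induction j with
  | zero => simp
  | succ j ih =>
    rw [pow_succ', AlgEquiv.mul_apply, ih, map_mul, aut_C, h, sc_X, pow_succ, C_mul]; ring

theorem exists_linear_coeff (F : MvPolynomial (Fin 2) K ≃ₐ[K] MvPolynomial (Fin 2) K)
    (h0 : ∀ i, coeff 0 (F (X i)) = 0) :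
    ∃ i, coeff (Finsupp.single 0 1) (F (X i)) ≠ 0 := by
  classical
  by_contra hcon
  push Not at hcon
  have key : ∀ p, coeff (Finsupp.single 0 1) (F p) = 0 := by
    intro p
    induction p using MvPolynomial.induction_on with
    | C a =>
      rw [aut_C, coeff_C, if_neg]
      intro h
      have := DFunLike.congr_fun h 0
      simp at this
    | add p q hp hq => rw [map_add, coeff_add, hp, hq, add_zero]
    | mul_X p i _ =>
      rw [map_mul, coeff_mul]
      refine Finset.sum_eq_zero ?_
      rintro ⟨x, y⟩ hxy
      rw [Finset.HasAntidiagonal.mem_antidiagonal] at hxy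
      simp only at hxy ⊢
      have e0 := DFunLike.congr_fun hxy 0
      have e1 := DFunLike.congr_fun hxy 1
      simp at e0 e1
      rcases Nat.eq_zero_or_pos (y 0) with hy | hy
      · have : y = 0 := fin2_ext (by simp; omega) (by simp; omega)
        rw [this, h0, mul_zero]
      · have : y = Finsupp.single 0 1 := fin2_ext (by simp; omega) (by simp; omega)
        rw [this, hcon, mul_zero]
  have h1 := key (F.symm (X 0))
  rw [AlgEquiv.apply_symm_apply] at h1
  simp [coeff_X] at h1

theorem lift_com {n : ℕ} (hn : 2 ≤ n) {ζ : K} (hζ : IsPrimitiveRoot ζ n)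
    (f : veronese K n ≃ₐ[K] veronese K n)
    (F : MvPolynomial (Fin 2) K ≃ₐ[K] MvPolynomial (Fin 2) K)
    (hF : ∀ v : veronese K n, F v = f v) : Com ζ F := by
  have hζ1 : ζ ≠ 1 := hζ.ne_one (by omega)
  have hsymm : ∀ v : veronese K n, F.symm v = f.symm v := by
    intro v
    rw [AlgEquiv.symm_apply_eq, hF]; simp
  obtain ⟨ξ, hξ, h1⟩ := fix_ver hn
    (((F : MvPolynomial (Fin 2) K →ₐ[K] MvPolynomial (Fin 2) K).comp (sc ζ)).comp
      (F.symm : MvPolynomial (Fin 2) K →ₐ[K] MvPolynomial (Fin 2) K)) (by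
    intro p hp
    change F (sc ζ (F.symm p)) = p
    have h1 := hsymm ⟨p, hp⟩
    simp only at h1
    rw [(mem_ver_iff hζ _).1, AlgEquiv.apply_symm_apply]
    rw [h1]; exact (f.symm ⟨p, hp⟩).2)
  have h2 : ∀ p, F (sc ζ p) = sc ξ (F p) := by
    intro p
    rw [← h1]
    change _ = F (sc ζ (F.symm (F p)))
    rw [AlgEquiv.symm_apply_apply]
  have h3 : ∀ i m, ζ * coeff m (F (X i)) = ξ ^ (m 0 + m 1) * coeff m (F (X i)) := by
    intro i m
    rw [← coeff_sc, ← h2, sc_X, map_mul, aut_C, coeff_C_mul]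
  have h4 : ∀ i, coeff 0 (F (X i)) = 0 := by
    intro i
    by_contra hne
    apply hζ1
    simpa using mul_right_cancel₀ hne (h3 i 0)
  obtain ⟨i, hi⟩ := exists_linear_coeff F h4
  have h5 := mul_right_cancel₀ hi (h3 i _)
  simp at h5
  subst h5
  exact h2

/-- restriction to the Veronese subalgebra -/
theorem exists_restrict {n : ℕ} {ζ : K} (hζ : IsPrimitiveRoot ζ n)
    {φ : MvPolynomial (Fin 2) K ≃ₐ[K] MvPolynomial (Fin 2) K} (hφ : Com ζ φ) :
    ∃ ψ : veronese K n ≃ₐ[K] veronese K n, ∀ v : veronese K n,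
      (ψ v : MvPolynomial (Fin 2) K) = φ v := by
  have key : ∀ φ : MvPolynomial (Fin 2) K ≃ₐ[K] MvPolynomial (Fin 2) K, Com ζ φ →
      ∀ v : veronese K n, φ v ∈ veronese K n := by
    intro φ hφ v
    rw [mem_ver_iff hζ, ← hφ, (mem_ver_iff hζ _).1 v.2]
  refine ⟨AlgEquiv.ofAlgHom
    (((φ : MvPolynomial (Fin 2) K →ₐ[K] MvPolynomial (Fin 2) K).comp
      (veronese K n).val).codRestrict _ (key φ hφ))
    (((φ.symm : MvPolynomial (Fin 2) K →ₐ[K] MvPolynomial (Fin 2) K).comp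
      (veronese K n).val).codRestrict _ (key φ.symm hφ.symm)) ?_ ?_, fun v => rfl⟩
  · apply AlgHom.ext
    intro v
    apply Subtype.ext
    change φ (φ.symm v) = v
    simp
  · apply AlgHom.ext
    intro v
    apply Subtype.ext
    change φ.symm (φ v) = v
    simp

theorem final [CharZero K] [IsAlgClosed K] (n : ℕ) (hn : 2 ≤ n)
    (f : veronese K n ≃ₐ[K] veronese K n) (m : ℕ) (hm : 1 ≤ m) (hf : f ^ m = 1) :
    ∃ φ : veronese K n ≃ₐ[K] veronese K n,
      ∃ L : MvPolynomial (Fin 2) K ≃ₐ[K] MvPolynomial (Fin 2) K, IsLinearAut K L ∧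
        ∀ a : veronese K n,
          (φ.symm (f (φ a)) : MvPolynomial (Fin 2) K) = L (a : MvPolynomial (Fin 2) K) := by
  haveI : NeZero n := ⟨by omega⟩
  obtain ⟨ζ, hζ⟩ := HasEnoughRootsOfUnity.exists_primitiveRoot K n
  have hζ1 : ζ ≠ 1 := hζ.ne_one (by omega)
  obtain ⟨F, hF⟩ := exists_lift_equiv hn f
  have hcom := lift_com hn hζ f F hF
  have hpow : ∀ (j : ℕ) (v : veronese K n), (F ^ j) v = (f ^ j) v := by
    intro j
    induction j with
    | zero => intro v; simp
    | succ j ih =>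
      intro v
      rw [pow_succ', AlgEquiv.mul_apply, ih, hF, pow_succ', AlgEquiv.mul_apply]
  have hfin : FinOrd F := by
    obtain ⟨ξ, hξ, h1⟩ := fix_ver hn
      ((F ^ m : MvPolynomial (Fin 2) K ≃ₐ[K] MvPolynomial (Fin 2) K) :
        MvPolynomial (Fin 2) K →ₐ[K] MvPolynomial (Fin 2) K) (by
      intro p hp
      have h1 := hpow m ⟨p, hp⟩
      rw [hf] at h1
      simpa using h1)
    have h2 : ∀ p, (F ^ m) p = sc ξ p := fun p => by rw [← h1]; rfl
    refine ⟨m * n, by positivity, ?_⟩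
    rw [pow_mul]
    have h3 : (((F ^ m) ^ n : MvPolynomial (Fin 2) K ≃ₐ[K] MvPolynomial (Fin 2) K) :
        MvPolynomial (Fin 2) K →ₐ[K] MvPolynomial (Fin 2) K) = AlgHom.id K _ := by
      apply MvPolynomial.algHom_ext
      intro i
      change ((F ^ m) ^ n) (X i) = X i
      rw [aut_sc_pow h2, hξ, C_1, one_mul]
    ext p
    exact congrArg (fun φ : MvPolynomial (Fin 2) K →ₐ[K] MvPolynomial (Fin 2) K => coeff _ (φ _)) h3
  obtain ⟨φ, hφ, hL⟩ := main_lin' hζ1 hcom hfin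
  obtain ⟨ψ, hψ⟩ := exists_restrict hζ hφ
  refine ⟨ψ, _, hL, ?_⟩
  intro a
  change _ = φ.symm (F (φ a))
  rw [AlgEquiv.eq_symm_apply, ← hψ, AlgEquiv.apply_symm_apply, ← hψ, hF]

end Final

end Ver

set_option synthInstance.maxHeartbeats 1000000 in
set_option maxHeartbeats 1000000 in
/-- Every automorphism of `K[xⁿ, …, yⁿ]` of finite order is linearizable:
it is conjugate to the restriction of a linear automorphism of `K[x,y]`. -/
theorem finite_order_automorphism_linearizable (K : Type*) [Field K] [CharZero K]
    [IsAlgClosed K] (n : ℕ) (hn : 2 ≤ n)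
    (f : veronese K n ≃ₐ[K] veronese K n) (m : ℕ) (hm : 1 ≤ m) (hf : f ^ m = 1) :
    ∃ φ : veronese K n ≃ₐ[K] veronese K n,
      ∃ L : MvPolynomial (Fin 2) K ≃ₐ[K] MvPolynomial (Fin 2) K, IsLinearAut K L ∧
        ∀ a : veronese K n,
          (φ.symm (f (φ a)) : MvPolynomial (Fin 2) K) = L (a : MvPolynomial (Fin 2) K) := by
  exact Ver.final n hn f m hm hf
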